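/- arXiv:2601.15318 — 13 statements merged into one kernel-verified Lean document; each statement's English description precedes it below -/
import Mathlib

section
/- Let v be a TU-game on N = {1,…,n}, let γ_S > 0 be weights for all nonempty proper subsets S of N, and let v* be a closest balanced game to v with respect to these weights. Then v*(S) ≤ v(S) for every nonempty proper subset S of N. -/
open Finset

/-- Sum of an allocation `x` over a coalition `S`: `x(S) = ∑_{i ∈ S} x_i`. -/
def coalSum {n : ℕ} (x : Fin n → ℝ) (S : Finset (Fin n)) : ℝ := ∑ i ∈ S, x i

/-- `x` belongs to the core of the TU-game `v`. -/
def inCore {n : ℕ} (v : Finset (Fin n) → ℝ) (x : Fin n → ℝ) : Prop :=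
  coalSum x Finset.univ = v Finset.univ ∧ ∀ S : Finset (Fin n), v S ≤ coalSum x S

/-- A game is balanced iff its core is nonempty. -/
def IsBalancedGame {n : ℕ} (v : Finset (Fin n) → ℝ) : Prop := ∃ x, inCore v x

/-- The nonempty proper subsets of `N = {1,…,n}`. -/
def propSubsets (n : ℕ) : Finset (Finset (Fin n)) :=
  Finset.univ.filter (fun S => S ≠ ∅ ∧ S ≠ Finset.univ)

/-- Weighted squared distance `∑_{∅≠S⊊N} γ_S (v(S) − w(S))²` between games. -/
def dist2 {n : ℕ} (γ v w : Finset (Fin n) → ℝ) : ℝ :=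
  ∑ S ∈ propSubsets n, γ S * (v S - w S) ^ 2

/-- `w` is a closest balanced game to `v` with respect to the weights `γ`:
`w` is a balanced game with `w(N) = v(N)` minimizing the weighted squared distance
to `v` among all balanced games `u` with `u(N) = v(N)`. -/
def IsClosestBalanced {n : ℕ} (γ v w : Finset (Fin n) → ℝ) : Prop :=
  w ∅ = 0 ∧ IsBalancedGame w ∧ w Finset.univ = v Finset.univ ∧
    ∀ u : Finset (Fin n) → ℝ, u ∅ = 0 → IsBalancedGame u →
      u Finset.univ = v Finset.univ → dist2 γ v w ≤ dist2 γ v u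

/-- Lemma 1 (Lemma `lem:low`): the closest balanced game satisfies
`v*(S) ≤ v(S)` for every nonempty proper subset `S` of `N`. -/
theorem closest_balanced_le (n : ℕ) (v vstar γ : Finset (Fin n) → ℝ)
    (hv0 : v ∅ = 0)
    (hγ : ∀ S ∈ propSubsets n, 0 < γ S)
    (hclosest : IsClosestBalanced γ v vstar) :
    ∀ S ∈ propSubsets n, vstar S ≤ v S := by
  intro S hS
  by_contra hlt
  push Not at hlt
  obtain ⟨h0, ⟨x, hx1, hx2⟩, hN, hmin⟩ := hclosest
  have hS' : S ≠ ∅ ∧ S ≠ Finset.univ := by simpa [propSubsets] using hS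
  have huN : Function.update vstar S (v S) Finset.univ = vstar Finset.univ :=
    Function.update_of_ne (Ne.symm hS'.2) _ _
  have hu0 : Function.update vstar S (v S) ∅ = vstar ∅ :=
    Function.update_of_ne (Ne.symm hS'.1) _ _
  have key := hmin (Function.update vstar S (v S)) (hu0.trans h0)
    ⟨x, hx1.trans huN.symm, fun T => by
      by_cases hT : T = S
      · subst hT
        rw [Function.update_self]
        exact hlt.le.trans (hx2 T)
      · rw [Function.update_of_ne hT]
        exact hx2 T⟩ (huN.trans hN)
  refine absurd key (not_le.mpr ?_)
  unfold dist2
  refine Finset.sum_lt_sum (fun T hT => ?_) ⟨S, hS, ?_⟩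
  · by_cases h : T = S
    · subst h
      rw [Function.update_self, sub_self]
      have := hγ T hT
      nlinarith [mul_nonneg this.le (sq_nonneg (v T - vstar T))]
    · rw [Function.update_of_ne h]
  · rw [Function.update_self, sub_self]
    have := mul_pos (hγ S hS) (sq_pos_of_neg (sub_neg.mpr hlt))
    simpa using this
end

section
/- Let v be a TU-game on N = {1,…,n}, let γ_S > 0 be weights for all nonempty proper subsets S of N, and let v* be a closest balanced game to v. If x ∈ C(v*) and S is a nonempty proper subset of N with x(S) ≥ v(S), then v*(S) = v(S). -/
open Finset

/-- Lemma 2 (Lemma `closest2`): if `x ∈ C(v*)` and `x(S) ≥ v(S)` for a nonempty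
proper subset `S` of `N`, then `v*(S) = v(S)`. -/
theorem closest_balanced_eq_of_core_ge (n : ℕ) (v vstar γ : Finset (Fin n) → ℝ)
    (hv0 : v ∅ = 0)
    (hγ : ∀ S ∈ propSubsets n, 0 < γ S)
    (hclosest : IsClosestBalanced γ v vstar)
    (x : Fin n → ℝ) (hx : inCore vstar x)
    (S : Finset (Fin n)) (hS : S ∈ propSubsets n)
    (hxS : v S ≤ coalSum x S) :
    vstar S = v S := by
  obtain ⟨h0, -, hN, hmin⟩ := hclosest
  have hS' : S ≠ ∅ ∧ S ≠ Finset.univ := by simpa [propSubsets] using hS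
  by_contra hne
  have hle := hmin (Function.update vstar S (v S))
    (by rw [Function.update_of_ne hS'.1.symm]; exact h0)
    ⟨x, by rw [Function.update_of_ne hS'.2.symm]; exact hx.1, fun T => by
      by_cases hT : T = S
      · subst hT; simpa using hxS
      · rw [Function.update_of_ne hT]; exact hx.2 T⟩
    (by rw [Function.update_of_ne hS'.2.symm]; exact hN)
  have hpos : 0 < γ S * (v S - vstar S) ^ 2 :=
    mul_pos (hγ S hS) (by have := sub_ne_zero.mpr (Ne.symm hne); positivity)
  have hlt : dist2 γ v (Function.update vstar S (v S)) < dist2 γ v vstar := by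
    unfold dist2
    refine Finset.sum_lt_sum (fun T _ => ?_) ⟨S, hS, by simpa using hpos⟩
    by_cases hT : T = S
    · subst hT; simpa using hpos.le
    · rw [Function.update_of_ne hT]
  exact absurd hle (not_le.mpr hlt)
end

section
/- Let v be a TU-game on N = {1,…,n}, let γ_S > 0 be weights for all nonempty proper subsets S of N, and let v* be a closest balanced game to v. If x ∈ C(v*) and S is a nonempty proper subset of N with x(S) ≤ v(S), then v*(S) = x(S). -/
open Finset

/-- Lemma 3 (Lemma `closest3`): if `x ∈ C(v*)` and `x(S) ≤ v(S)` for a nonempty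
proper subset `S` of `N`, then `v*(S) = x(S)`. -/
theorem closest_balanced_eq_of_core_le (n : ℕ) (v vstar γ : Finset (Fin n) → ℝ)
    (hv0 : v ∅ = 0)
    (hγ : ∀ S ∈ propSubsets n, 0 < γ S)
    (hclosest : IsClosestBalanced γ v vstar)
    (x : Fin n → ℝ) (hx : inCore vstar x)
    (S : Finset (Fin n)) (hS : S ∈ propSubsets n)
    (hxS : coalSum x S ≤ v S) :
    vstar S = coalSum x S := by
  obtain ⟨h0, -, hN, hmin⟩ := hclosest
  by_contra hne
  have hlt : vstar S < coalSum x S := lt_of_le_of_ne (hx.2 S) hne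
  have hS' : S ≠ ∅ ∧ S ≠ Finset.univ := by simpa [propSubsets] using hS
  have hu0 : Function.update vstar S (coalSum x S) ∅ = 0 := by
    rw [Function.update_of_ne hS'.1.symm, h0]
  have huN : Function.update vstar S (coalSum x S) Finset.univ = vstar Finset.univ :=
    Function.update_of_ne hS'.2.symm _ _
  have hle := hmin (Function.update vstar S (coalSum x S)) hu0
    ⟨x, by rw [huN]; exact hx.1, fun T => by
      by_cases hT : T = S
      · subst hT; simp
      · rw [Function.update_of_ne hT]; exact hx.2 T⟩ (huN.trans hN)
  refine absurd hle (not_le.mpr ?_)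
  have hsq : γ S * (v S - coalSum x S) ^ 2 < γ S * (v S - vstar S) ^ 2 :=
    mul_lt_mul_of_pos_left (by nlinarith) (hγ S hS)
  unfold dist2
  refine Finset.sum_lt_sum (fun T _ => ?_) ⟨S, hS, by simpa using hsq⟩
  by_cases hT : T = S
  · subst hT; simpa using hsq.le
  · rw [Function.update_of_ne hT]
end

section
/- Let v be a TU-game on N = {1,…,n}, let γ_S > 0 be weights for all nonempty proper subsets S of N, let v* be a closest balanced game to v, and let x ∈ C(v*). Then v*(S) = min{x(S), v(S)} for every nonempty proper subset S of N, and v*(N) = v(N). -/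
open Finset

/-- Corollary (Corollary `corclosest`): for any `x ∈ C(v*)`,
`v*(S) = min{x(S), v(S)}` for every nonempty proper subset `S`, and `v*(N) = v(N)`. -/
theorem closest_balanced_eq_min (n : ℕ) (v vstar γ : Finset (Fin n) → ℝ)
    (hv0 : v ∅ = 0)
    (hγ : ∀ S ∈ propSubsets n, 0 < γ S)
    (hclosest : IsClosestBalanced γ v vstar)
    (x : Fin n → ℝ) (hx : inCore vstar x) :
    (∀ S ∈ propSubsets n, vstar S = min (coalSum x S) (v S)) ∧
      vstar Finset.univ = v Finset.univ := by
  obtain ⟨h0, -, hN, hmin⟩ := hclosest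
  refine ⟨fun S hS => ?_, hN⟩
  by_contra hne
  have hS' := hS
  simp only [propSubsets, Finset.mem_filter, Finset.mem_univ, true_and] at hS'
  obtain ⟨hSe, hSu⟩ := hS'
  have hle := hx.2 S
  have key := hmin (Function.update vstar S (min (coalSum x S) (v S)))
    (by rw [Function.update_of_ne (Ne.symm hSe)]; exact h0)
    ⟨x, by rw [Function.update_of_ne (Ne.symm hSu)]; exact hx.1, fun T => by
      by_cases hT : T = S
      · subst hT
        rw [Function.update_self]
        exact min_le_left _ _
      · rw [Function.update_of_ne hT]
        exact hx.2 T⟩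
    (by rw [Function.update_of_ne (Ne.symm hSu)]; exact hN)
  have hlt : (v S - min (coalSum x S) (v S)) ^ 2 < (v S - vstar S) ^ 2 := by
    rcases le_total (coalSum x S) (v S) with h | h
    · rw [min_eq_left h] at hne ⊢
      have := lt_of_le_of_ne hle hne
      nlinarith
    · rw [min_eq_right h] at hne ⊢
      have : v S - vstar S ≠ 0 := fun hh => hne (by linarith)
      have := pow_pos (abs_pos.mpr this) 2
      rw [sq_abs] at this
      simpa using this
  refine absurd key (not_le.mpr ?_)
  unfold dist2
  refine Finset.sum_lt_sum (fun T _ => ?_) ⟨S, hS, ?_⟩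
  · by_cases hT : T = S
    · subst hT
      rw [Function.update_self]
      exact mul_le_mul_of_nonneg_left hlt.le (hγ _ hS).le
    · rw [Function.update_of_ne hT]
  · rw [Function.update_self]
    exact mul_lt_mul_of_pos_left hlt (hγ _ hS)
end

section
/- Problems (P2) and (P4) are equivalent in the following sense. (i) If x* is an optimal solution of (P4), then the pair (v*, x*) is an optimal solution of (P2), where v* is the game defined by v*(S) = min{x*(S), v(S)} for all nonempty proper subsets S of N and v*(N) = v(N). (ii) If (v*, x*) is an optimal solution of (P2), then x* is an optimal solution of (P4). -/
open Finset

/-- The objective of Problem (P4):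
`g(x) = ∑_{∅≠S⊊N} γ_S (v(S) − x(S))² · 1_{x(S) ≤ v(S)}`. -/
noncomputable def gP4 {n : ℕ} (γ v : Finset (Fin n) → ℝ) (x : Fin n → ℝ) : ℝ :=
  ∑ S ∈ propSubsets n,
    γ S * (v S - coalSum x S) ^ 2 * (if coalSum x S ≤ v S then 1 else 0)

/-- Feasibility for Problem (P2): `w` is a game, `w(S) ≤ x(S)` for all nonempty
proper subsets `S` of `N`, and `w(N) = x(N) = v(N)`. -/
def FeasP2 {n : ℕ} (v w : Finset (Fin n) → ℝ) (x : Fin n → ℝ) : Prop :=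
  w ∅ = 0 ∧ (∀ S ∈ propSubsets n, w S ≤ coalSum x S) ∧
    w Finset.univ = v Finset.univ ∧ coalSum x Finset.univ = v Finset.univ

/-- `(w, x)` is an optimal solution of Problem (P2). -/
def OptP2 {n : ℕ} (γ v w : Finset (Fin n) → ℝ) (x : Fin n → ℝ) : Prop :=
  FeasP2 v w x ∧ ∀ (w' : Finset (Fin n) → ℝ) (x' : Fin n → ℝ),
    FeasP2 v w' x' → dist2 γ v w ≤ dist2 γ v w'

/-- `x` is an optimal solution of Problem (P4). -/
noncomputable def OptP4 {n : ℕ} (γ v : Finset (Fin n) → ℝ) (x : Fin n → ℝ) : Prop :=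
  coalSum x Finset.univ = v Finset.univ ∧
    ∀ x' : Fin n → ℝ, coalSum x' Finset.univ = v Finset.univ → gP4 γ v x ≤ gP4 γ v x'

theorem gP4_le_dist2 {n : ℕ} (v γ w : Finset (Fin n) → ℝ) (x : Fin n → ℝ)
    (hγ : ∀ S ∈ propSubsets n, 0 < γ S)
    (hw : ∀ S ∈ propSubsets n, w S ≤ coalSum x S) : gP4 γ v x ≤ dist2 γ v w := by
  unfold gP4 dist2
  refine Finset.sum_le_sum fun S hS => ?_
  have h1 := hγ S hS
  have h2 := hw S hS
  split_ifs with h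
  · rw [mul_one]
    refine mul_le_mul_of_nonneg_left ?_ h1.le
    exact pow_le_pow_left₀ (by linarith) (by linarith) 2
  · rw [mul_zero]
    positivity

theorem dist2_eq_gP4 {n : ℕ} (v γ w : Finset (Fin n) → ℝ) (x : Fin n → ℝ)
    (hw : ∀ S ∈ propSubsets n, w S = min (coalSum x S) (v S)) :
    dist2 γ v w = gP4 γ v x := by
  unfold gP4 dist2
  refine Finset.sum_congr rfl fun S hS => ?_
  rw [hw S hS]
  split_ifs with h
  · rw [min_eq_left h, mul_one]
  · rw [min_eq_right (not_le.mp h).le]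
    simp

/-- Proposition (Proposition `prop:equiv`): equivalence of Problems (P2) and (P4).
(i) If `x*` is optimal for (P4) then `(v*, x*)` is optimal for (P2), where `v*` is the
game with `v*(S) = min{x*(S), v(S)}` for nonempty proper `S` and `v*(N) = v(N)`.
(ii) If `(v*, x*)` is optimal for (P2), then `x*` is optimal for (P4). -/
theorem P2_equiv_P4 (n : ℕ) (v γ : Finset (Fin n) → ℝ)
    (hv0 : v ∅ = 0)
    (hγ : ∀ S ∈ propSubsets n, 0 < γ S) :
    (∀ xs : Fin n → ℝ, OptP4 γ v xs →
      ∀ vstar : Finset (Fin n) → ℝ,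
        vstar ∅ = 0 → vstar Finset.univ = v Finset.univ →
        (∀ S ∈ propSubsets n, vstar S = min (coalSum xs S) (v S)) →
        OptP2 γ v vstar xs) ∧
    (∀ (vstar : Finset (Fin n) → ℝ) (xs : Fin n → ℝ),
      OptP2 γ v vstar xs → OptP4 γ v xs) := by
  refine ⟨fun xs hx vs h0 hN hS => ⟨⟨h0, fun S h => ?_, hN, hx.1⟩, fun w' x' hf => ?_⟩,
    fun vs xs h => ⟨h.1.2.2.2, fun x' hx' => ?_⟩⟩
  · rw [hS S h]
    exact min_le_left _ _
  · rw [dist2_eq_gP4 v γ vs xs hS]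
    exact (hx.2 x' hf.2.2.2).trans (gP4_le_dist2 v γ w' x' hγ hf.2.1)
  · let w : Finset (Fin n) → ℝ := fun S =>
      if S ∈ propSubsets n then min (coalSum x' S) (v S) else v S
    have hw : ∀ S ∈ propSubsets n, w S = min (coalSum x' S) (v S) := fun S hS => if_pos hS
    have hfeas : FeasP2 v w x' := by
      refine ⟨?_, fun S hS => ?_, ?_, hx'⟩
      · simp [w, propSubsets, hv0]
      · rw [hw S hS]
        exact min_le_left _ _
      · simp [w, propSubsets]
    rw [← dist2_eq_gP4 v γ w x' hw]
    exact (gP4_le_dist2 v γ vs xs hγ h.1.2.1).trans (h.2 w x' hfeas)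
end

section
/- Let 𝒜* be a family of nonempty proper subsets of N = {1,…,n} and suppose x* ∈ ℝⁿ satisfies x*(N) = v(N) and minimizes ∑_{S∈𝒜*} γ_S (v(S) − x(S))² over all x ∈ ℝⁿ with x(N) = v(N); suppose moreover that x*(S) ≤ v(S) for every S ∈ 𝒜* and x*(S) > v(S) for every nonempty proper subset S ∉ 𝒜*. Then x* minimizes g(x) = ∑_{∅≠S⊊N} γ_S (max{v(S) − x(S), 0})² over all x ∈ ℝⁿ with x(N) = v(N). -/
open Finset

/-- The objective of Problem (P4), written with the max:
`g(x) = ∑_{∅≠S⊊N} γ_S (max{v(S) − x(S), 0})²`. -/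
def gMax {n : ℕ} (γ v : Finset (Fin n) → ℝ) (x : Fin n → ℝ) : ℝ :=
  ∑ S ∈ propSubsets n, γ S * (max (v S - coalSum x S) 0) ^ 2

/-- Theorem (Theorem `convergence`): if `x*` minimizes `∑_{S∈𝒜*} γ_S (v(S) − x(S))²`
subject to `x(N) = v(N)`, with `x*(S) ≤ v(S)` for every `S ∈ 𝒜*` and `x*(S) > v(S)`
for every nonempty proper subset `S ∉ 𝒜*`, then `x*` minimizes
`g(x) = ∑_{∅≠S⊊N} γ_S (max{v(S) − x(S), 0})²` subject to `x(N) = v(N)`. -/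
theorem optimal_on_active_family (n : ℕ) (v γ : Finset (Fin n) → ℝ)
    (hv0 : v ∅ = 0)
    (hγ : ∀ S ∈ propSubsets n, 0 < γ S)
    (A : Finset (Finset (Fin n))) (hA : A ⊆ propSubsets n)
    (xs : Fin n → ℝ)
    (hxsN : coalSum xs Finset.univ = v Finset.univ)
    (hmin : ∀ x : Fin n → ℝ, coalSum x Finset.univ = v Finset.univ →
      ∑ S ∈ A, γ S * (v S - coalSum xs S) ^ 2 ≤ ∑ S ∈ A, γ S * (v S - coalSum x S) ^ 2)
    (hin : ∀ S ∈ A, coalSum xs S ≤ v S)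
    (hout : ∀ S ∈ propSubsets n, S ∉ A → v S < coalSum xs S) :
    ∀ x : Fin n → ℝ, coalSum x Finset.univ = v Finset.univ →
      gMax γ v xs ≤ gMax γ v x := by
  intro x hx
  have hP : ∑ S ∈ A, γ S * ((v S - coalSum xs S) * (coalSum x S - coalSum xs S)) = 0 := by
    set P := ∑ S ∈ A, γ S * ((v S - coalSum xs S) * (coalSum x S - coalSum xs S)) with hPd
    set Q := ∑ S ∈ A, γ S * (coalSum x S - coalSum xs S) ^ 2 with hQd
    have hQ : 0 ≤ Q := Finset.sum_nonneg fun S hS =>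
      mul_nonneg (hγ S (hA hS)).le (sq_nonneg _)
    have key : ∀ t : ℝ, 0 ≤ -2 * t * P + t ^ 2 * Q := by
      intro t
      have hc : ∀ S : Finset (Fin n), coalSum (fun i => xs i + t * (x i - xs i)) S
          = coalSum xs S + t * (coalSum x S - coalSum xs S) := by
        intro S
        simp only [coalSum, Finset.sum_add_distrib, ← Finset.mul_sum, Finset.sum_sub_distrib]
      have h := hmin (fun i => xs i + t * (x i - xs i)) (by rw [hc, hx, hxsN]; ring)
      have e : ∑ S ∈ A, γ S * (v S - coalSum (fun i => xs i + t * (x i - xs i)) S) ^ 2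
          = ∑ S ∈ A, γ S * (v S - coalSum xs S) ^ 2 + (-2 * t * P + t ^ 2 * Q) := by
        rw [hPd, hQd, Finset.mul_sum, Finset.mul_sum, ← Finset.sum_add_distrib,
          ← Finset.sum_add_distrib]
        refine Finset.sum_congr rfl fun S _ => ?_
        rw [hc]; ring
      linarith
    have h := key (P / (Q + 1))
    have hQ1 : 0 < Q + 1 := by linarith
    have e : -2 * (P / (Q + 1)) * P + (P / (Q + 1)) ^ 2 * Q
        = -(P ^ 2 * (Q + 2)) / (Q + 1) ^ 2 := by
      field_simp
      ring
    rw [e, le_div_iff₀ (by positivity)] at h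
    have : P ^ 2 ≤ 0 := by nlinarith [mul_nonneg (sq_nonneg P) hQ]
    exact pow_eq_zero_iff (two_ne_zero) |>.1 (le_antisymm this (sq_nonneg P))
  have h1 : gMax γ v xs = ∑ S ∈ A, γ S * (v S - coalSum xs S) ^ 2 := by
    unfold gMax
    rw [← Finset.sum_subset hA]
    · refine Finset.sum_congr rfl fun S hS => ?_
      rw [max_eq_left (by linarith [hin S hS])]
    · intro S hS hSA
      rw [max_eq_right (by linarith [hout S hS hSA])]
      ring
  have h2 : ∑ S ∈ A, γ S * (max (v S - coalSum x S) 0) ^ 2 ≤ gMax γ v x :=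
    Finset.sum_le_sum_of_subset_of_nonneg hA fun S hS _ =>
      mul_nonneg (hγ S hS).le (sq_nonneg _)
  have h3 : ∑ S ∈ A, γ S * (v S - coalSum xs S) ^ 2
      - 2 * ∑ S ∈ A, γ S * ((v S - coalSum xs S) * (coalSum x S - coalSum xs S))
      ≤ ∑ S ∈ A, γ S * (max (v S - coalSum x S) 0) ^ 2 := by
    rw [Finset.mul_sum, ← Finset.sum_sub_distrib]
    refine Finset.sum_le_sum fun S hS => ?_
    have hg := (hγ S (hA hS)).le
    have ha := hin S hS
    have : (v S - coalSum xs S) ^ 2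
        - 2 * ((v S - coalSum xs S) * (coalSum x S - coalSum xs S))
        ≤ (max (v S - coalSum x S) 0) ^ 2 := by
      rcases le_total (v S - coalSum x S) 0 with h | h
      · rw [max_eq_right h]
        nlinarith [mul_nonneg (sub_nonneg.2 ha) (neg_nonneg.2 h), sq_nonneg (v S - coalSum xs S)]
      · rw [max_eq_left h]
        nlinarith [sq_nonneg (coalSum x S - coalSum xs S)]
    nlinarith [mul_le_mul_of_nonneg_left this hg]
  rw [hP] at h3
  linarith
end

section
/- Let 𝒜* be a family of nonempty proper subsets of N = {1,…,n} and suppose x* ∈ ℝⁿ satisfies x*(N) = v(N) and minimizes ∑_{S∈𝒜*} γ_S (v(S) − x(S))² over all x ∈ ℝⁿ with x(N) = v(N), with x*(S) ≤ v(S) for every S ∈ 𝒜* and x*(S) > v(S) for every nonempty proper subset S ∉ 𝒜*. Define the game v* by v*(S) = min{x*(S), v(S)} for nonempty proper subsets S of N, v*(N) = v(N), v*(∅) = 0. Then v* is balanced, x* ∈ C(v*), and v* is the unique closest balanced game to v: for every balanced game w with w(N) = v(N) and w ≠ v*, one has ∑_{∅≠S⊊N} γ_S (v(S) − v*(S))²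 < ∑_{∅≠S⊊N} γ_S (v(S) − w(S))². -/
open Finset

/-- Corollary (Corollary `cor:optim`): if the CLOBIS algorithm terminates with
output `x*` and active family `𝒜*`, i.e. `x*` minimizes the restricted objective
with `x*(S) ≤ v(S)` on `𝒜*` and `x*(S) > v(S)` off `𝒜*`, then the game
`v*(S) = min{x*(S), v(S)}` (for nonempty proper `S`, with `v*(N) = v(N)`, `v*(∅) = 0`)
is balanced, `x* ∈ C(v*)`, and `v*` is the unique closest balanced game to `v`. -/
theorem clobis_output_is_closest (n : ℕ) (v γ : Finset (Fin n) → ℝ)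
    (hv0 : v ∅ = 0)
    (hγ : ∀ S ∈ propSubsets n, 0 < γ S)
    (A : Finset (Finset (Fin n))) (hA : A ⊆ propSubsets n)
    (xs : Fin n → ℝ)
    (hxsN : coalSum xs Finset.univ = v Finset.univ)
    (hmin : ∀ x : Fin n → ℝ, coalSum x Finset.univ = v Finset.univ →
      ∑ S ∈ A, γ S * (v S - coalSum xs S) ^ 2 ≤ ∑ S ∈ A, γ S * (v S - coalSum x S) ^ 2)
    (hin : ∀ S ∈ A, coalSum xs S ≤ v S)
    (hout : ∀ S ∈ propSubsets n, S ∉ A → v S < coalSum xs S)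
    (vstar : Finset (Fin n) → ℝ)
    (hvstar0 : vstar ∅ = 0)
    (hvstarN : vstar Finset.univ = v Finset.univ)
    (hvstarS : ∀ S ∈ propSubsets n, vstar S = min (coalSum xs S) (v S)) :
    IsBalancedGame vstar ∧ inCore vstar xs ∧
      ∀ w : Finset (Fin n) → ℝ, w ∅ = 0 → IsBalancedGame w →
        w Finset.univ = v Finset.univ → w ≠ vstar →
        dist2 γ v vstar < dist2 γ v w := by
  have hmem : ∀ S : Finset (Fin n), S ∈ propSubsets n ↔ S ≠ ∅ ∧ S ≠ Finset.univ := by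
    intro S
    simp [propSubsets]
  have hcore : inCore vstar xs := by
    refine ⟨by rw [hxsN, hvstarN], fun S => ?_⟩
    by_cases h0 : S = ∅
    · subst h0
      simp [hvstar0, coalSum]
    by_cases h1 : S = Finset.univ
    · subst h1
      rw [hxsN, hvstarN]
    · rw [hvstarS S ((hmem S).2 ⟨h0, h1⟩)]
      exact min_le_left _ _
  refine ⟨⟨xs, hcore⟩, hcore, ?_⟩
  intro w hw0 hwb hwN hne
  obtain ⟨x, hxN, hx⟩ := hwb
  -- first-order optimality condition
  have hL : ∑ S ∈ A, γ S * ((v S - coalSum xs S) * (coalSum x S - coalSum xs S)) ≤ 0 := by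
    set L := ∑ S ∈ A, γ S * ((v S - coalSum xs S) * (coalSum x S - coalSum xs S)) with hLdef
    set Q := ∑ S ∈ A, γ S * (coalSum x S - coalSum xs S) ^ 2 with hQdef
    have hQ : 0 ≤ Q := Finset.sum_nonneg fun S hS =>
      mul_nonneg (hγ S (hA hS)).le (sq_nonneg _)
    have key : ∀ t : ℝ, 0 ≤ t ^ 2 * Q - 2 * t * L := by
      intro t
      have hc : ∀ S : Finset (Fin n), coalSum (fun i => xs i + t * (x i - xs i)) S
          = coalSum xs S + t * (coalSum x S - coalSum xs S) := by
        intro S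
        simp only [coalSum, Finset.sum_add_distrib, ← Finset.mul_sum, Finset.sum_sub_distrib]
      have h := hmin (fun i => xs i + t * (x i - xs i)) (by
        rw [hc, hxsN, hxN, hwN]; ring)
      have e : ∑ S ∈ A, γ S * (v S - coalSum (fun i => xs i + t * (x i - xs i)) S) ^ 2
          = ∑ S ∈ A, γ S * (v S - coalSum xs S) ^ 2 + (t ^ 2 * Q - 2 * t * L) := by
        rw [hLdef, hQdef, Finset.mul_sum, Finset.mul_sum, ← Finset.sum_sub_distrib,
          ← Finset.sum_add_distrib]
        refine Finset.sum_congr rfl fun S _ => ?_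
        rw [hc]; ring
      linarith
    by_contra hpos
    push Not at hpos
    have h := key (L / (Q + 1))
    have hQ1 : 0 < Q + 1 := by linarith
    have e : (L / (Q + 1)) ^ 2 * Q - 2 * (L / (Q + 1)) * L
        = -((L / (Q + 1)) ^ 2 * (Q + 2)) := by
      field_simp
      ring
    have : 0 < (L / (Q + 1)) ^ 2 * (Q + 2) := by positivity
    linarith
  have hcross : 0 ≤ ∑ S ∈ propSubsets n, γ S * ((v S - vstar S) * (vstar S - w S)) := by
    have e : ∑ S ∈ A, γ S * ((v S - vstar S) * (vstar S - w S))
        = ∑ S ∈ propSubsets n, γ S * ((v S - vstar S) * (vstar S - w S)) := by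
      refine Finset.sum_subset hA fun S hS hSA => ?_
      rw [hvstarS S hS, min_eq_right (hout S hS hSA).le]
      ring
    rw [← e]
    have h2 : ∑ S ∈ A, -(γ S * ((v S - coalSum xs S) * (coalSum x S - coalSum xs S)))
        ≤ ∑ S ∈ A, γ S * ((v S - vstar S) * (vstar S - w S)) := by
      refine Finset.sum_le_sum fun S hS => ?_
      rw [hvstarS S (hA hS), min_eq_left (hin S hS)]
      have h3 : 0 ≤ γ S * ((v S - coalSum xs S) * (coalSum x S - w S)) :=
        mul_nonneg (hγ S (hA hS)).le
          (mul_nonneg (sub_nonneg.2 (hin S hS)) (sub_nonneg.2 (hx S)))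
      linarith
    rw [Finset.sum_neg_distrib] at h2
    linarith
  have hsq : 0 < ∑ S ∈ propSubsets n, γ S * (vstar S - w S) ^ 2 := by
    obtain ⟨S, hS⟩ := Function.ne_iff.1 hne
    have hSp : S ∈ propSubsets n := by
      refine (hmem S).2 ⟨?_, ?_⟩
      · rintro rfl
        exact hS (by rw [hw0, hvstar0])
      · rintro rfl
        exact hS (by rw [hwN, hvstarN])
    refine Finset.sum_pos' (fun T hT => mul_nonneg (hγ T hT).le (sq_nonneg _)) ⟨S, hSp, ?_⟩
    have : vstar S - w S ≠ 0 := sub_ne_zero.2 (Ne.symm hS)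
    exact mul_pos (hγ S hSp) (by positivity)
  have e : dist2 γ v w = dist2 γ v vstar
      + (2 * ∑ S ∈ propSubsets n, γ S * ((v S - vstar S) * (vstar S - w S))
      + ∑ S ∈ propSubsets n, γ S * (vstar S - w S) ^ 2) := by
    unfold dist2
    rw [Finset.mul_sum, ← Finset.sum_add_distrib, ← Finset.sum_add_distrib]
    refine Finset.sum_congr rfl fun S _ => ?_
    ring
  linarith
end

section
/- Let v be a TU-game on N = {1,…,n}, let γ_S > 0 be weights for all nonempty proper subsets S of N, let v* be a closest balanced game to v, let x* ∈ C(v*), and set 𝒜* = {S : S nonempty proper subset of N, x*(S) ≤ v(S)}. Then for every minimal balanced collection 𝓑 ∈ 𝔅*(n) and every system of balancing weights (λ_S)_{S∈𝓑} of 𝓑: ∑_{S∈𝓑} λ_S v*(S) = v*(N) if and only if 𝓑 ⊆ 𝒜*. -/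
open Finset

/-- `lam` is a system of balancing weights for the collection `B`:
all weights are positive and `∑_{S∈B, S∋i} λ_S = 1` for every player `i`. -/
def IsBalancingWeights {n : ℕ} (B : Finset (Finset (Fin n)))
    (lam : Finset (Fin n) → ℝ) : Prop :=
  (∀ S ∈ B, 0 < lam S) ∧ ∀ i : Fin n, ∑ S ∈ B.filter (fun S => i ∈ S), lam S = 1

/-- `B` is a balanced collection: a family of nonempty subsets of `N` admitting a
system of balancing weights. -/
def IsBalancedCollection {n : ℕ} (B : Finset (Finset (Fin n))) : Prop :=
  (∀ S ∈ B, S ≠ ∅) ∧ ∃ lam, IsBalancingWeights B lam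

/-- `B` is a minimal balanced collection: balanced and no proper subfamily is balanced. -/
def IsMinimalBalancedCollection {n : ℕ} (B : Finset (Finset (Fin n))) : Prop :=
  IsBalancedCollection B ∧ ∀ B' ⊂ B, ¬ IsBalancedCollection B'

/-- The family `𝒜* = {S : ∅ ≠ S ⊊ N, x(S) ≤ v(S)}`. -/
noncomputable def Astar {n : ℕ} (v : Finset (Fin n) → ℝ) (x : Fin n → ℝ) :
    Finset (Finset (Fin n)) :=
  (propSubsets n).filter (fun S => coalSum x S ≤ v S)

/-- The final lemma of Section 3: for a minimal balanced collection `𝓑 ∈ 𝔅*(n)`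
with balancing weights `λ`, the closest balanced game `v*` lies in the facet defined
by `𝓑` (i.e. `∑_{S∈𝓑} λ_S v*(S) = v*(N)`) if and only if `𝓑 ⊆ 𝒜*`, where
`𝒜* = {S : ∅ ≠ S ⊊ N, x*(S) ≤ v(S)}` and `x* ∈ C(v*)`. -/
theorem facet_iff_subset_Astar (n : ℕ) (v vstar γ : Finset (Fin n) → ℝ)
    (hv0 : v ∅ = 0)
    (hγ : ∀ S ∈ propSubsets n, 0 < γ S)
    (hclosest : IsClosestBalanced γ v vstar)
    (xs : Fin n → ℝ) (hx : inCore vstar xs)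
    (B : Finset (Finset (Fin n)))
    (hB : IsMinimalBalancedCollection B) (hBne : B ≠ {Finset.univ})
    (lam : Finset (Fin n) → ℝ) (hlam : IsBalancingWeights B lam) :
    (∑ S ∈ B, lam S * vstar S) = vstar Finset.univ ↔ B ⊆ Astar v xs := by
  obtain ⟨hw0, -, hwN, hmin⟩ := hclosest
  obtain ⟨hxN, hxS⟩ := hx
  obtain ⟨⟨hBnon, -⟩, hBmin⟩ := hB
  obtain ⟨hpos, hbal⟩ := hlam
  -- the members of `B` are nonempty proper coalitions
  have hprop : ∀ S ∈ B, S ∈ propSubsets n := by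
    intro S hS
    simp only [propSubsets, Finset.mem_filter, Finset.mem_univ, true_and]
    refine ⟨hBnon S hS, ?_⟩
    rintro rfl
    have hsub : ({Finset.univ} : Finset (Finset (Fin n))) ⊂ B :=
      Finset.ssubset_iff_subset_ne.mpr ⟨Finset.singleton_subset_iff.mpr hS, hBne.symm⟩
    refine hBmin _ hsub ⟨?_, fun _ => 1, ?_, ?_⟩
    · intro T hT
      rw [Finset.mem_singleton] at hT
      rw [hT]
      exact hBnon _ hS
    · intro T _
      exact one_pos
    · intro i
      simp [Finset.filter_singleton]
  -- the closest game is `min (v S) (x*(S))` on proper coalitions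
  have hkey : ∀ S ∈ propSubsets n, vstar S = min (v S) (coalSum xs S) := by
    classical
    let u : Finset (Fin n) → ℝ := fun S =>
      if S ∈ propSubsets n then min (v S) (coalSum xs S) else vstar S
    have hu : ∀ S ∈ propSubsets n, u S = min (v S) (coalSum xs S) := fun S hS => if_pos hS
    have hu' : ∀ S, S ∉ propSubsets n → u S = vstar S := fun S hS => if_neg hS
    have hu0 : u ∅ = vstar ∅ := hu' _ (by simp [propSubsets])
    have huN : u Finset.univ = vstar Finset.univ := hu' _ (by simp [propSubsets])
    have hd := hmin u (hu0.trans hw0) ⟨xs, hxN.trans huN.symm, by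
      intro S
      by_cases hS : S ∈ propSubsets n
      · rw [hu S hS]; exact min_le_right _ _
      · rw [hu' S hS]; exact hxS S⟩ (huN.trans hwN)
    have hle : ∀ S ∈ propSubsets n, γ S * (v S - u S) ^ 2 ≤ γ S * (v S - vstar S) ^ 2 := by
      intro S hS
      refine mul_le_mul_of_nonneg_left ?_ (hγ S hS).le
      rw [hu S hS]
      rcases le_total (v S) (coalSum xs S) with h | h
      · rw [min_eq_left h]; nlinarith [sq_nonneg (v S - vstar S)]
      · rw [min_eq_right h]; nlinarith [hxS S]
    have heq := (Finset.sum_eq_sum_iff_of_le hle).mp (le_antisymm (Finset.sum_le_sum hle) hd)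
    intro S hS
    have h1 := mul_left_cancel₀ (hγ S hS).ne' (heq S hS)
    rw [hu S hS] at h1
    rcases le_total (v S) (coalSum xs S) with h | h
    · rw [min_eq_left h] at h1 ⊢
      have h2 : (v S - vstar S) ^ 2 = 0 := by rw [← h1]; ring
      have := pow_eq_zero_iff (two_ne_zero) |>.mp h2
      linarith
    · rw [min_eq_right h] at h1 ⊢
      have h3 := hxS S
      have := (sq_eq_sq₀ (by linarith) (by linarith)).mp h1
      linarith
  have hsum : ∑ S ∈ B, lam S * coalSum xs S = vstar Finset.univ := by
    rw [← hxN]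
    unfold coalSum
    calc ∑ S ∈ B, lam S * ∑ i ∈ S, xs i
        = ∑ S ∈ B, ∑ i, if i ∈ S then lam S * xs i else 0 := by
          refine Finset.sum_congr rfl fun S _ => ?_
          rw [Finset.mul_sum, Finset.sum_ite_mem, Finset.univ_inter]
      _ = ∑ i, ∑ S ∈ B, if i ∈ S then lam S * xs i else 0 := Finset.sum_comm
      _ = ∑ i, xs i := by
          refine Finset.sum_congr rfl fun i _ => ?_
          rw [← Finset.sum_filter, ← Finset.sum_mul, hbal i, one_mul]
  rw [← hsum, Finset.sum_eq_sum_iff_of_le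
    (fun S hS => mul_le_mul_of_nonneg_left (hxS S) (hpos S hS).le)]
  refine forall₂_congr fun S hS => ?_
  rw [Astar, Finset.mem_filter, mul_right_inj' (hpos S hS).ne', hkey S (hprop S hS),
    min_eq_right_iff]
  exact ⟨fun h => ⟨hprop S hS, h⟩, fun h => h.2⟩
end

section
/- Let n ≥ 2 and let 𝓑 be a family of exactly n distinct nonempty subsets of N = {1,…,n}, with incidence matrix M_𝓑 ∈ {0,1}^{n×n} (rows indexed by the players of N, columns indexed by the members of 𝓑 in some fixed order, with entry 1 exactly when the player belongs to the set). Then 𝓑 is a minimal balanced collection if and only if M_𝓑 is invertible over ℝ and the unique solution λ of M_𝓑 λ = 𝟙 (where 𝟙 is the all-ones vector) is componentwise strictly positive. -/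
open Finset

open Matrix

/-- Characterization of minimal balanced collections of cardinality `n`:
a family `𝓑` of exactly `n` distinct nonempty subsets of `N = {1,…,n}`, enumerated
by an injective map `c : Fin n → Finset (Fin n)` with range `𝓑`, is a minimal
balanced collection iff its incidence matrix `M` (with `M i j = 1` iff `i ∈ c j`)
is invertible over `ℝ` and the unique solution `λ = M⁻¹ 𝟙` of `M λ = 𝟙` is
componentwise strictly positive. -/
theorem mbc_iff_incidence_invertible_posSolution
    (n : ℕ) (hn : 2 ≤ n) (B : Finset (Finset (Fin n)))
    (hcard : B.card = n) (hne : ∀ S ∈ B, S ≠ ∅)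
    (c : Fin n → Finset (Fin n)) (hcinj : Function.Injective c)
    (hcB : ∀ j, c j ∈ B)
    (M : Matrix (Fin n) (Fin n) ℝ)
    (hM : ∀ i j, M i j = if i ∈ c j then 1 else 0) :
    IsMinimalBalancedCollection B ↔
      (IsUnit M ∧ ∀ j, 0 < (M⁻¹ *ᵥ (1 : Fin n → ℝ)) j) := by
  have hBimg : B = Finset.univ.image c := by
    symm
    apply Finset.eq_of_subset_of_card_le
    · intro S hS
      obtain ⟨j, -, rfl⟩ := Finset.mem_image.1 hS
      exact hcB j
    · rw [Finset.card_image_of_injective _ hcinj, hcard]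
      simp
  have hsurj : ∀ S ∈ B, ∃ j, c j = S := by
    intro S hS
    rw [hBimg] at hS
    obtain ⟨j, -, h⟩ := Finset.mem_image.1 hS
    exact ⟨j, h⟩
  have key : ∀ (f : Finset (Fin n) → ℝ) (i : Fin n),
      ∑ S ∈ B.filter (fun S => i ∈ S), f S = (M *ᵥ (fun j => f (c j))) i := by
    intro f i
    rw [Finset.sum_filter, hBimg, Finset.sum_image (fun a _ b _ h => hcinj h)]
    simp [Matrix.mulVec, dotProduct, hM]
  have key2 : ∀ (B' : Finset (Finset (Fin n))) (f : Finset (Fin n) → ℝ) (i : Fin n), B' ⊆ B →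
      ∑ S ∈ B'.filter (fun S => i ∈ S), f S
        = (M *ᵥ (fun j => if c j ∈ B' then f (c j) else 0)) i := by
    intro B' f i hsub
    rw [← key (fun S => if S ∈ B' then f S else 0) i, ← Finset.sum_filter]
    apply Finset.sum_congr _ (fun _ _ => rfl)
    ext S
    simp only [Finset.mem_filter]
    constructor
    · rintro ⟨h1, h2⟩
      exact ⟨⟨hsub h1, h2⟩, h1⟩
    · rintro ⟨⟨_, h2⟩, h1⟩
      exact ⟨h1, h2⟩
  constructor
  · rintro ⟨⟨-, lam, hpos, hsum⟩, hmin⟩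
    have hx : M *ᵥ (fun j => lam (c j)) = 1 := by
      ext i
      rw [← key lam i, hsum i]
      rfl
    have hU : IsUnit M := by
      rw [Matrix.isUnit_iff_isUnit_det, isUnit_iff_ne_zero]
      intro hdet
      have hv : ∃ v : Fin n → ℝ, (∃ j, 0 < v j) ∧ M *ᵥ v = 0 := by
        obtain ⟨v, hv0, hv⟩ := Matrix.exists_mulVec_eq_zero_iff.2 hdet
        obtain ⟨j, hj⟩ := Function.ne_iff.1 hv0
        rcases lt_or_gt_of_ne hj with h | h
        · refine ⟨-v, ⟨j, ?_⟩, ?_⟩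
          · simpa using h
          · rw [Matrix.mulVec_neg, hv, neg_zero]
        · exact ⟨v, ⟨j, h⟩, hv⟩
      obtain ⟨v, ⟨j1, hj1⟩, hv⟩ := hv
      obtain ⟨j0, hj0, hj0min⟩ := Finset.exists_min_image
        (Finset.univ.filter (fun j => 0 < v j)) (fun j => lam (c j) / v j)
        ⟨j1, by simpa using hj1⟩
      have hvj0 : 0 < v j0 := by simpa using hj0
      obtain ⟨t, ht⟩ : ∃ t, t = lam (c j0) / v j0 := ⟨_, rfl⟩
      have htpos : 0 < t := ht ▸ div_pos (hpos _ (hcB j0)) hvj0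
      obtain ⟨y, hy⟩ : ∃ y : Fin n → ℝ, y = (fun j => lam (c j)) - t • v := ⟨_, rfl⟩
      have hyj : ∀ j, y j = lam (c j) - t * v j := by
        intro j; simp [hy]
      have hMy : M *ᵥ y = 1 := by
        rw [hy, Matrix.mulVec_sub, hx, Matrix.mulVec_smul, hv, smul_zero, sub_zero]
      have hy0 : ∀ j, 0 ≤ y j := by
        intro j
        rw [hyj]
        by_cases h : 0 < v j
        · have h2 := hj0min j (by simpa using h)
          rw [← ht, le_div_iff₀ h] at h2
          linarith
        · have := hpos _ (hcB j)
          have := mul_nonneg htpos.le (neg_nonneg.2 (not_lt.1 h))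
          linarith
      have hyj0 : y j0 = 0 := by
        rw [hyj, ht, div_mul_cancel₀ _ hvj0.ne', sub_self]
      let B' := (Finset.univ.filter (fun j => 0 < y j)).image c
      have hmem : ∀ j, c j ∈ B' ↔ 0 < y j := by
        intro j
        simp only [B', Finset.mem_image, Finset.mem_filter, Finset.mem_univ, true_and]
        constructor
        · rintro ⟨k, hk, hkj⟩
          rwa [← hcinj hkj]
        · intro h
          exact ⟨j, h, rfl⟩
      have hsub : B' ⊆ B := by
        intro S hS
        obtain ⟨j, -, rfl⟩ := Finset.mem_image.1 hS
        exact hcB j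
      apply hmin B'
      · refine (Finset.ssubset_iff_of_subset hsub).2 ⟨c j0, hcB j0, ?_⟩
        rw [hmem, hyj0]
        exact lt_irrefl 0
      · refine ⟨fun S hS => hne S (hsub hS), Function.extend c y 0, ?_, ?_⟩
        · intro S hS
          obtain ⟨j, rfl⟩ := hsurj S (hsub hS)
          rw [hcinj.extend_apply]
          exact (hmem j).1 hS
        · intro i
          rw [key2 B' _ i hsub]
          have : (fun j => if c j ∈ B' then Function.extend c y 0 (c j) else 0) = y := by
            ext j
            rw [hcinj.extend_apply]
            split_ifs with h
            · rfl
            · rw [hmem] at h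
              exact le_antisymm (hy0 j) (not_lt.1 h)
          rw [this, hMy]
          rfl
    refine ⟨hU, ?_⟩
    intro j
    rw [← hx, Matrix.mulVec_mulVec,
      Matrix.nonsing_inv_mul _ ((Matrix.isUnit_iff_isUnit_det M).1 hU), Matrix.one_mulVec]
    exact hpos _ (hcB j)
  · rintro ⟨hU, hpos⟩
    have hdet := (Matrix.isUnit_iff_isUnit_det M).1 hU
    refine ⟨⟨hne, Function.extend c (M⁻¹ *ᵥ (1 : Fin n → ℝ)) 0, ?_, ?_⟩, ?_⟩
    · intro S hS
      obtain ⟨j, rfl⟩ := hsurj S hS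
      rw [hcinj.extend_apply]
      exact hpos j
    · intro i
      rw [key]
      simp only [hcinj.extend_apply]
      change (M *ᵥ (M⁻¹ *ᵥ (1 : Fin n → ℝ))) i = 1
      rw [Matrix.mulVec_mulVec, Matrix.mul_nonsing_inv _ hdet, Matrix.one_mulVec]
      rfl
    · rintro B' hB' ⟨-, lam, -, hsum⟩
      obtain ⟨S, hS, hSB'⟩ := Finset.exists_of_ssubset hB'
      obtain ⟨j, rfl⟩ := hsurj S hS
      have h1 : M *ᵥ (fun j => if c j ∈ B' then lam (c j) else 0) = 1 := by
        ext i
        rw [← key2 B' lam i hB'.subset, hsum i]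
        rfl
      have h2 := hpos j
      rw [← h1, Matrix.mulVec_mulVec, Matrix.nonsing_inv_mul _ hdet, Matrix.one_mulVec] at h2
      simp [hSB'] at h2
end

section
/- For every n ≥ 2, the number B_n^n of minimal balanced collections on N = {1,…,n} consisting of exactly n subsets satisfies n! · B_n^n = M_n, where M_n is the number of n×n matrices with entries in {0,1} that are invertible over ℝ and whose unique solution x of Mx = 𝟙 is componentwise strictly positive. -/
open Finset

open Matrix

/-- `B_n^n`: the number of minimal balanced collections on `N = {1,…,n}` (other
than `{N}`) consisting of exactly `n` subsets. -/
noncomputable def Bnn (n : ℕ) : ℕ :=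
  Nat.card {B : Finset (Finset (Fin n)) //
    IsMinimalBalancedCollection B ∧ B ≠ {Finset.univ} ∧ B.card = n}

/-- `M_n`: the number of `n×n` matrices with entries in `{0,1}` that are invertible
over `ℝ` and whose unique solution `x = M⁻¹ 𝟙` of `M x = 𝟙` is componentwise
strictly positive. -/
noncomputable def Mcard (n : ℕ) : ℕ :=
  Nat.card {M : Matrix (Fin n) (Fin n) ℝ //
    (∀ i j, M i j = 0 ∨ M i j = 1) ∧ IsUnit M ∧
      ∀ j, 0 < (M⁻¹ *ᵥ (1 : Fin n → ℝ)) j}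

/-- The 0/1 matrix whose columns are the indicator vectors of the sets `S j`. -/
noncomputable def colMat {n : ℕ} (S : Fin n → Finset (Fin n)) : Matrix (Fin n) (Fin n) ℝ :=
  fun i j => if i ∈ S j then 1 else 0

lemma colMat_sum {n : ℕ} (S : Fin n → Finset (Fin n)) (hS : Function.Injective S)
    (A : Finset (Fin n)) (lam : Finset (Fin n) → ℝ) (i : Fin n) :
    ∑ T ∈ (A.image S).filter (fun T => i ∈ T), lam T = ∑ j ∈ A, colMat S i j * lam (S j) := by
  rw [Finset.sum_filter, Finset.sum_image (fun a _ b _ h => hS h)]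
  refine Finset.sum_congr rfl fun j _ => ?_
  simp [colMat]

/-- A nonnegative solution supported exactly on `A` makes the subfamily `S '' A` balanced. -/
lemma balanced_of_sol {n : ℕ} (S : Fin n → Finset (Fin n)) (hS : Function.Injective S)
    (hne : ∀ j, S j ≠ ∅) (y : Fin n → ℝ) (hy : colMat S *ᵥ y = 1)
    (A : Finset (Fin n)) (hA : ∀ j ∈ A, 0 < y j) (hA0 : ∀ j, j ∉ A → y j = 0) :
    IsBalancedCollection (A.image S) := by
  refine ⟨?_, Function.extend S y 0, ?_, ?_⟩
  · intro T hT
    obtain ⟨j, -, rfl⟩ := Finset.mem_image.1 hT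
    exact hne j
  · intro T hT
    obtain ⟨j, hj, rfl⟩ := Finset.mem_image.1 hT
    rw [hS.extend_apply]
    exact hA j hj
  · intro i
    rw [colMat_sum S hS]
    simp only [hS.extend_apply]
    have h := congrFun hy i
    simp only [Matrix.mulVec, dotProduct, Pi.one_apply] at h
    rw [← h]
    refine Finset.sum_subset (Finset.subset_univ _) fun j _ hj => ?_
    rw [hA0 j hj, mul_zero]

/-- A balanced subfamily yields a solution vanishing outside of it. -/
lemma sol_of_balanced {n : ℕ} (S : Fin n → Finset (Fin n)) (hS : Function.Injective S)
    (B : Finset (Finset (Fin n))) (hB : B ⊆ Finset.univ.image S) (h : IsBalancedCollection B) :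
    ∃ y : Fin n → ℝ, colMat S *ᵥ y = 1 ∧ (∀ j, S j ∈ B → 0 < y j) ∧
      ∀ j, S j ∉ B → y j = 0 := by
  obtain ⟨-, lam, hpos, hsum⟩ := h
  have hBA : (Finset.univ.filter (fun j => S j ∈ B)).image S = B := by
    ext T
    simp only [Finset.mem_image, Finset.mem_filter, Finset.mem_univ, true_and]
    constructor
    · rintro ⟨j, hj, rfl⟩
      exact hj
    · intro hT
      obtain ⟨j, -, rfl⟩ := Finset.mem_image.1 (hB hT)
      exact ⟨j, hT, rfl⟩
  refine ⟨fun j => if S j ∈ B then lam (S j) else 0, ?_, ?_, ?_⟩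
  · ext i
    have h := hsum i
    rw [← hBA, colMat_sum S hS, Finset.sum_filter] at h
    simp only [Matrix.mulVec, dotProduct, Pi.one_apply]
    rw [← h]
    refine Finset.sum_congr rfl fun j _ => ?_
    split_ifs <;> simp
  · intro j hj
    simp [hj, hpos _ hj]
  · intro j hj
    simp [hj]

/-- The pivoting step: a positive solution and a kernel vector give a nonnegative solution
with a zero coordinate. -/
lemma exists_boundary {n : ℕ} (M : Matrix (Fin n) (Fin n) ℝ) (x v : Fin n → ℝ)
    (hx : M *ᵥ x = 1) (hpos : ∀ j, 0 < x j) (hv : M *ᵥ v = 0) (hv0 : ∃ j, 0 < v j) :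
    ∃ y : Fin n → ℝ, M *ᵥ y = 1 ∧ (∀ j, 0 ≤ y j) ∧ ∃ j, y j = 0 := by
  obtain ⟨j0, hj0⟩ := hv0
  obtain ⟨k, hk, hmin⟩ := Finset.exists_min_image (Finset.univ.filter (fun j => 0 < v j))
    (fun j => x j / v j) ⟨j0, by simp [hj0]⟩
  simp only [Finset.mem_filter, Finset.mem_univ, true_and] at hk hmin
  have ht : 0 < x k / v k := div_pos (hpos k) hk
  refine ⟨x - (x k / v k) • v, ?_, ?_, k, ?_⟩
  · rw [Matrix.mulVec_sub, Matrix.mulVec_smul, hv, hx, smul_zero, sub_zero]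
  · intro j
    simp only [Pi.sub_apply, Pi.smul_apply, smul_eq_mul]
    rcases lt_or_ge 0 (v j) with h | h
    · have := (le_div_iff₀ h).1 (hmin j h)
      linarith
    · have := mul_nonpos_of_nonneg_of_nonpos ht.le h
      linarith [hpos j]
  · simp only [Pi.sub_apply, Pi.smul_apply, smul_eq_mul]
    rw [div_mul_cancel₀ _ hk.ne', sub_self]

lemma good_of_minimal {n : ℕ} (S : Fin n → Finset (Fin n)) (hS : Function.Injective S)
    (h : IsMinimalBalancedCollection (Finset.univ.image S)) :
    IsUnit (colMat S) ∧ ∀ j, 0 < ((colMat S)⁻¹ *ᵥ (1 : Fin n → ℝ)) j := by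
  have hne : ∀ j, S j ≠ ∅ := fun j => h.1.1 _ (Finset.mem_image_of_mem _ (Finset.mem_univ j))
  obtain ⟨x, hx, hpos, -⟩ := sol_of_balanced S hS _ (Finset.Subset.refl _) h.1
  replace hpos : ∀ j, 0 < x j :=
    fun j => hpos j (Finset.mem_image_of_mem _ (Finset.mem_univ j))
  have hu : IsUnit (colMat S) := by
    rw [Matrix.isUnit_iff_isUnit_det, isUnit_iff_ne_zero]
    intro hdet
    obtain ⟨v, hv0, hv⟩ := Matrix.exists_mulVec_eq_zero_iff.2 hdet
    have : ∃ w : Fin n → ℝ, colMat S *ᵥ w = 0 ∧ ∃ j, 0 < w j := by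
      obtain ⟨j, hj⟩ := Function.ne_iff.1 hv0
      rcases lt_or_gt_of_ne hj with h | h
      · refine ⟨-v, by rw [Matrix.mulVec_neg, hv, neg_zero], j, ?_⟩
        simpa using h
      · exact ⟨v, hv, j, by simpa using h⟩
    obtain ⟨w, hw, hw0⟩ := this
    obtain ⟨y, hy, hy0, k, hk⟩ := exists_boundary _ x w hx hpos hw hw0
    refine h.2 ((Finset.univ.filter (fun j => 0 < y j)).image S) ?_
      (balanced_of_sol S hS hne y hy _ (by simp) ?_)
    · refine (Finset.image_ssubset_image hS).2 ?_
      refine Finset.filter_ssubset.2 ⟨k, Finset.mem_univ _, ?_⟩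
      simp [hk]
    · intro j hj
      simp only [Finset.mem_filter, Finset.mem_univ, true_and, not_lt] at hj
      exact le_antisymm hj (hy0 j)
  refine ⟨hu, ?_⟩
  rw [← hx, Matrix.mulVec_mulVec, Matrix.nonsing_inv_mul _ ((Matrix.isUnit_iff_isUnit_det _).1 hu),
    Matrix.one_mulVec]
  exact hpos

lemma minimal_of_good {n : ℕ} (S : Fin n → Finset (Fin n)) (hu : IsUnit (colMat S))
    (hpos : ∀ j, 0 < ((colMat S)⁻¹ *ᵥ (1 : Fin n → ℝ)) j) :
    Function.Injective S ∧ IsMinimalBalancedCollection (Finset.univ.image S) := by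
  have hinj : Function.Injective (colMat S).mulVec := Matrix.mulVec_injective_iff_isUnit.2 hu
  have hS : Function.Injective S := by
    intro a b hab
    by_contra hne
    have : (Pi.single a 1 : Fin n → ℝ) = Pi.single b 1 := by
      apply hinj
      ext i
      simp [colMat, hab]
    have h2 := congrFun this a
    simp [Pi.single_eq_of_ne hne] at h2
  have hne : ∀ j, S j ≠ ∅ := by
    intro j hj
    have : (Pi.single j 1 : Fin n → ℝ) = 0 := by
      apply hinj
      ext i
      simp [colMat, hj]
    have h2 := congrFun this j
    simp at h2
  have hx : colMat S *ᵥ ((colMat S)⁻¹ *ᵥ (1 : Fin n → ℝ)) = 1 := by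
    rw [Matrix.mulVec_mulVec, Matrix.mul_nonsing_inv _ ((Matrix.isUnit_iff_isUnit_det _).1 hu),
      Matrix.one_mulVec]
  refine ⟨hS, balanced_of_sol S hS hne _ hx _ (fun j _ => hpos j) (by simp), ?_⟩
  intro B' hB' hbal
  obtain ⟨y, hy, -, hy0⟩ := sol_of_balanced S hS B' hB'.1 hbal
  have hyx := hinj (hy.trans hx.symm)
  obtain ⟨T, hT, hTB⟩ := Finset.exists_of_ssubset hB'
  obtain ⟨j, -, rfl⟩ := Finset.mem_image.1 hT
  have h1 := hpos j
  rw [← hyx, hy0 j hTB] at h1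
  exact lt_irrefl _ h1

lemma colMat_injective {n : ℕ} : Function.Injective (colMat (n := n)) := by
  intro S T h
  funext j
  ext i
  have := congrFun (congrFun h i) j
  simp only [colMat] at this
  by_cases h1 : i ∈ S j <;> by_cases h2 : i ∈ T j <;> simp_all

lemma exists_colMat {n : ℕ} (M : Matrix (Fin n) (Fin n) ℝ) (h : ∀ i j, M i j = 0 ∨ M i j = 1) :
    ∃ S, colMat S = M := by
  classical
  refine ⟨fun j => Finset.univ.filter (fun i => M i j = 1), ?_⟩
  ext i j
  rcases h i j with h | h <;> simp [colMat, h]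

lemma image_coe_equiv {n : ℕ} (B : Finset (Finset (Fin n))) (e : Fin n ≃ B) :
    Finset.univ.image (fun j => (e j : Finset (Fin n))) = B := by
  ext T
  simp only [Finset.mem_image, Finset.mem_univ, true_and]
  constructor
  · rintro ⟨j, rfl⟩
    exact (e j).2
  · intro hT
    exact ⟨e.symm ⟨T, hT⟩, by simp⟩

lemma coe_equiv_injective {n : ℕ} (B : Finset (Finset (Fin n))) (e : Fin n ≃ B) :
    Function.Injective (fun j => (e j : Finset (Fin n))) :=
  Subtype.val_injective.comp e.injective

/-- For every `n ≥ 2`, `n! · B_n^n = M_n`. -/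
theorem factorial_mul_Bnn_eq_Mcard (n : ℕ) (hn : 2 ≤ n) :
    n.factorial * Bnn n = Mcard n := by
  classical
  unfold Bnn Mcard
  set X := {B : Finset (Finset (Fin n)) //
    IsMinimalBalancedCollection B ∧ B ≠ {Finset.univ} ∧ B.card = n} with hX
  have hcard : ∀ B : X, Nat.card (Fin n ≃ B.1) = n.factorial := by
    intro B
    have e : Fin n ≃ B.1 := (Fintype.equivFinOfCardEq (by simp [B.2.2.2])).symm
    rw [Nat.card_eq_fintype_card, Fintype.card_equiv e, Fintype.card_fin]
  have hsig : Nat.card (Σ B : X, (Fin n ≃ B.1)) = n.factorial * Nat.card X := by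
    rw [Nat.card_sigma]
    simp only [hcard]
    simp [mul_comm]
  rw [← hsig]
  refine Nat.card_congr (Equiv.ofBijective
    (fun p => ⟨colMat (fun j => (p.2 j : Finset (Fin n))), ?_, ?_⟩) ⟨?_, ?_⟩)
  · intro i j
    simp only [colMat]
    split_ifs <;> simp
  · apply good_of_minimal _ (coe_equiv_injective _ p.2)
    rw [image_coe_equiv]
    exact p.1.2.1
  · rintro ⟨⟨B, hB⟩, e⟩ ⟨⟨B', hB'⟩, e'⟩ h
    have h1 := colMat_injective (Subtype.ext_iff.1 h)
    have h2 : B = B' := by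
      rw [← image_coe_equiv B e, ← image_coe_equiv B' e']
      exact congrArg (fun S => Finset.univ.image S) h1
    subst h2
    have h3 : e = e' := by
      ext1 j
      exact Subtype.ext (congrFun h1 j)
    rw [h3]
  · rintro ⟨M, h01, hu, hpos⟩
    obtain ⟨S, rfl⟩ := exists_colMat M h01
    obtain ⟨hS, hmin⟩ := minimal_of_good S hu hpos
    have hc : (Finset.univ.image S).card = n := by
      rw [Finset.card_image_of_injective _ hS, Finset.card_univ, Fintype.card_fin]
    let f : Fin n → (Finset.univ.image S : Finset (Finset (Fin n))) :=
      fun j => ⟨S j, Finset.mem_image_of_mem _ (Finset.mem_univ j)⟩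
    have hf : Function.Bijective f := by
      constructor
      · intro a b hab
        exact hS (Subtype.ext_iff.1 hab)
      · rintro ⟨T, hT⟩
        obtain ⟨j, -, rfl⟩ := Finset.mem_image.1 hT
        exact ⟨j, rfl⟩
    refine ⟨⟨⟨Finset.univ.image S, hmin, ?_, hc⟩, Equiv.ofBijective f hf⟩, ?_⟩
    · intro h
      rw [h, Finset.card_singleton] at hc
      omega
    · rfl
end

section
/- For n ≥ 1 and 1 ≤ i ≤ n, let q_n(i) be the proportion, among all invertible n×n sign matrices C, of those for which the i-th coordinate of C⁻¹𝟙 equals 0. Then lim_{n→∞} max_{1≤i≤n} q_n(i) = 0. -/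
open Matrix

/-- A sign matrix: an `n×n` real matrix with all entries in `{−1,1}`. -/
def IsSignMatrix {n : ℕ} (C : Matrix (Fin n) (Fin n) ℝ) : Prop :=
  ∀ i j, C i j = 1 ∨ C i j = -1

/-- `q_n(i)`: the proportion, among all invertible `n×n` sign matrices `C`, of
those for which the `i`-th coordinate of `C⁻¹𝟙` equals `0`. -/
noncomputable def qn (n : ℕ) (i : Fin n) : ℝ :=
  (Nat.card {C : Matrix (Fin n) (Fin n) ℝ //
      IsSignMatrix C ∧ IsUnit C ∧ (C⁻¹ *ᵥ (1 : Fin n → ℝ)) i = 0} : ℝ) /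
  (Nat.card {C : Matrix (Fin n) (Fin n) ℝ // IsSignMatrix C ∧ IsUnit C} : ℝ)

open Classical in
/-- Uniform probability of an event on a finite type. -/
noncomputable def pr {α : Type*} [Fintype α] (E : α → Prop) : ℝ :=
  (∑ x, if E x then (1 : ℝ) else 0) / Fintype.card α

section prob
variable {α β γ : Type*} [Fintype α] [Fintype β] [Fintype γ]

open Classical in
lemma pr_eq_card (E : α → Prop) :
    pr E = ((Finset.univ.filter E).card : ℝ) / Fintype.card α := by
  unfold pr
  simp

lemma pr_nonneg (E : α → Prop) : 0 ≤ pr E := by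
  rw [pr_eq_card]; positivity

lemma pr_mono {E F : α → Prop} (h : ∀ x, E x → F x) : pr E ≤ pr F := by
  classical
  rw [pr_eq_card, pr_eq_card]
  gcongr ?_ / _
  exact_mod_cast Finset.card_le_card (fun x hx => by
    simp only [Finset.mem_filter, Finset.mem_univ, true_and] at hx ⊢
    exact h x hx)

lemma pr_or (E F : α → Prop) : pr (fun x => E x ∨ F x) ≤ pr E + pr F := by
  classical
  unfold pr
  rw [← add_div, ← Finset.sum_add_distrib]
  gcongr with x
  by_cases h1 : E x <;> by_cases h2 : F x <;> simp [h1, h2]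

lemma pr_exists {ι : Type*} (s : Finset ι) (E : ι → α → Prop) :
    pr (fun x => ∃ i ∈ s, E i x) ≤ ∑ i ∈ s, pr (E i) := by
  classical
  induction s using Finset.induction_on with
  | empty => simp [pr]
  | insert a s ha ih =>
    rw [Finset.sum_insert ha]
    refine le_trans (le_trans (pr_mono ?_) (pr_or (E a) (fun x => ∃ i ∈ s, E i x))) (by gcongr)
    intro x hx
    simpa using hx

lemma pr_equiv (e : α ≃ β) (E : β → Prop) : pr (fun x => E (e x)) = pr E := by
  classical
  unfold pr
  rw [Fintype.card_congr e]
  congr 1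
  exact Fintype.sum_equiv e _ _ (fun x => rfl)

lemma pr_prod_le [Nonempty α] (E : β × α → Prop) (c : ℝ)
    (h : ∀ a, pr (fun b => E (b, a)) ≤ c) : pr E ≤ c := by
  classical
  have key : pr E = (∑ a, pr (fun b => E (b, a))) / Fintype.card α := by
    unfold pr
    rw [Fintype.sum_prod_type_right, Fintype.card_prod, ← Finset.sum_div, div_div]
    push_cast
    rfl
  rw [key, div_le_iff₀ (by exact_mod_cast Fintype.card_pos)]
  calc _ ≤ ∑ a : α, c := Finset.sum_le_sum (fun a _ => h a)
    _ = _ := by simp [mul_comm]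

lemma pr_fst [Nonempty β] (E : α → Prop) : pr (fun p : α × β => E p.1) = pr E := by
  classical
  unfold pr
  rw [Fintype.sum_prod_type, Fintype.card_prod]
  have : (Fintype.card β : ℝ) ≠ 0 := by exact_mod_cast Fintype.card_ne_zero
  have h2 : ∀ x : α, (∑ _y : β, if E x then (1 : ℝ) else 0)
      = (Fintype.card β : ℝ) * (if E x then (1 : ℝ) else 0) := by
    intro x
    rw [Finset.sum_const, Finset.card_univ, nsmul_eq_mul]
  rw [Finset.sum_congr rfl (fun x _ => h2 x), ← Finset.mul_sum]
  push_cast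
  rw [mul_comm, mul_div_mul_right _ _ this]

lemma pr_update_le [DecidableEq α] [Nonempty β] (r : α) (E : (α → β) → Prop) (c : ℝ)
    (h : ∀ M, pr (fun x => E (Function.update M r x)) ≤ c) : pr E ≤ c := by
  classical
  let e : β × (α → β) ≃ (α → β) × β :=
    { toFun := fun p => (Function.update p.2 r p.1, p.2 r)
      invFun := fun p => (p.1 r, Function.update p.1 r p.2)
      left_inv := by intro p; simp
      right_inv := by intro p; simp }
  rw [← pr_fst (β := β) E, ← pr_equiv e]
  exact pr_prod_le _ c h

end prob

/-- The sign attached to a Boolean. -/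
noncomputable def sg (b : Bool) : ℝ := if b then 1 else -1

lemma sg_inj : Function.Injective sg := by
  intro a b h
  cases a <;> cases b <;> simp [sg] at h ⊢ <;> norm_num at h

lemma sg_ne (b : Bool) : sg b ≠ 0 := by cases b <;> simp [sg]

lemma pr_subspace {n d : ℕ} (W : Submodule ℝ (Fin n → ℝ)) (hW : Module.finrank ℝ W ≤ d) :
    pr (fun x : Fin n → Bool => (fun i => sg (x i)) ∈ W) ≤ 2 ^ d / 2 ^ n := by
  classical
  obtain ⟨κ, a, ha, hspan, hli⟩ := exists_linearIndependent' ℝ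
    (fun i : Fin n => (LinearMap.proj i : (Fin n → ℝ) →ₗ[ℝ] ℝ).comp W.subtype)
  have : Fintype κ := Fintype.ofInjective a ha
  have hκ : Fintype.card κ ≤ d := by
    have h := hli.fintype_card_le_finrank
    have h2 : Module.finrank ℝ (W →ₗ[ℝ] ℝ) = Module.finrank ℝ W := Subspace.dual_finrank_eq
    omega
  rw [pr_eq_card]
  have hc : (Finset.univ.filter (fun x : Fin n → Bool => (fun i => sg (x i)) ∈ W)).card
      ≤ Fintype.card (κ → Bool) := by
    refine Finset.card_le_card_of_injOn (fun x => x ∘ a) (fun _ _ => Finset.mem_univ _) ?_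
    intro x hx y hy hxy
    simp only [Finset.coe_filter, Finset.mem_univ, true_and, Set.mem_ofPred_eq] at hx hy
    let X : W := ⟨_, hx⟩
    let Y : W := ⟨_, hy⟩
    have hall : ∀ f ∈ Submodule.span ℝ (Set.range
        ((fun i : Fin n => (LinearMap.proj i : (Fin n → ℝ) →ₗ[ℝ] ℝ).comp W.subtype) ∘ a)),
        f X = f Y := by
      intro f hf
      induction hf using Submodule.span_induction with
      | mem f hf =>
        obtain ⟨k, rfl⟩ := hf
        have := congrFun hxy k
        simp only [Function.comp] at this
        simp [X, Y, this]
      | zero => simp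
      | add f g _ _ h1 h2 => simp [h1, h2]
      | smul c f _ h1 => simp [h1]
    rw [hspan] at hall
    funext i
    have := hall _ (Submodule.subset_span ⟨i, rfl⟩)
    exact sg_inj (by simpa [X, Y] using this)
  have hc2 : ((Finset.univ.filter (fun x : Fin n → Bool => (fun i => sg (x i)) ∈ W)).card : ℝ)
      ≤ 2 ^ d := by
    have : Fintype.card (κ → Bool) ≤ 2 ^ d := by
      simpa using Nat.pow_le_pow_right (by norm_num) hκ
    exact_mod_cast hc.trans this
  simp only [Fintype.card_fun, Fintype.card_bool, Fintype.card_fin]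
  push_cast
  gcongr

lemma centralBinom_sq_le (m : ℕ) : (2 * m + 1) * (m.centralBinom) ^ 2 ≤ 16 ^ m := by
  induction m with
  | zero => simp
  | succ m ih =>
    have h := Nat.succ_mul_centralBinom_succ m
    have hpos : 0 < (m + 1) ^ 2 := by positivity
    refine Nat.le_of_mul_le_mul_left ?_ hpos
    calc (m + 1) ^ 2 * ((2 * (m + 1) + 1) * ((m + 1).centralBinom) ^ 2)
        = (2 * m + 3) * ((m + 1) * (m + 1).centralBinom) ^ 2 := by ring
      _ = 4 * (2 * m + 3) * (2 * m + 1) * ((2 * m + 1) * m.centralBinom ^ 2) := by rw [h]; ring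
      _ ≤ 4 * (2 * m + 3) * (2 * m + 1) * 16 ^ m := by gcongr
      _ ≤ (16 * (m + 1) ^ 2) * 16 ^ m := Nat.mul_le_mul_right _ (by nlinarith)
      _ = _ := by ring

lemma choose_half_sq_le (s : ℕ) : (s + 1) * (s.choose (s / 2)) ^ 2 ≤ 4 ^ s := by
  rcases Nat.even_or_odd' s with ⟨m, rfl | rfl⟩
  · have := centralBinom_sq_le m
    rw [Nat.centralBinom] at this
    rw [Nat.mul_div_cancel_left _ (by norm_num : 0 < 2), pow_mul]
    simpa using this
  · have h := centralBinom_sq_le (m + 1)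
    have h2 : (m + 1).centralBinom = 2 * (2 * m + 1).choose m := by
      rw [Nat.centralBinom, show 2 * (m + 1) = (2 * m + 1) + 1 by ring, Nat.choose_succ_succ,
        Nat.choose_symm_half]
      ring
    have h3 : (2 * m + 1) / 2 = m := by omega
    rw [h3]
    rw [h2] at h
    have h4 : (4 : ℕ) ^ (2 * m + 1) * 4 = 16 ^ (m + 1) := by
      rw [← pow_succ, show 2 * m + 1 + 1 = 2 * (m + 1) by ring, pow_mul]; norm_num
    nlinarith [sq_nonneg ((2 * m + 1).choose m)]

lemma choose_half_le (s : ℕ) : (s.choose (s / 2) : ℝ) / 2 ^ s ≤ 1 / √(s + 1) := by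
  have h : ((s : ℝ) + 1) * (s.choose (s / 2)) ^ 2 ≤ 4 ^ s := by exact_mod_cast choose_half_sq_le s
  rw [div_le_div_iff₀ (by positivity) (by positivity), one_mul]
  refine (sq_le_sq₀ (by positivity) (by positivity)).mp ?_
  rw [mul_pow, Real.sq_sqrt (by positivity), ← pow_mul, mul_comm s 2, pow_mul]
  norm_num
  linarith

/-- Littlewood-Offord with all coefficients nonzero. -/
lemma pr_lo_nonzero {ι : Type*} [Fintype ι] [DecidableEq ι] (v : ι → ℝ) (hv : ∀ i, v i ≠ 0) (t : ℝ) :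
    pr (fun x : ι → Bool => ∑ i, v i * sg (x i) = t) ≤ 1 / √(Fintype.card ι + 1) := by
  classical
  refine le_trans ?_ (choose_half_le (Fintype.card ι))
  rw [pr_eq_card]
  simp only [Fintype.card_fun, Fintype.card_bool]
  push_cast
  gcongr
  let F : (ι → Bool) → Finset ι := fun x => Finset.univ.filter (fun i => 0 < v i * sg (x i))
  have hval : ∀ x i, v i * sg (x i) = if i ∈ F x then |v i| else -|v i| := by
    intro x i
    simp only [F, Finset.mem_filter, Finset.mem_univ, true_and]
    rcases lt_or_gt_of_ne (hv i) with h | h <;> cases x i <;>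
      simp [sg, abs_of_neg, abs_of_pos, h, h.le]
  have hF : Function.Injective F := by
    intro x y hxy
    funext i
    have h1 := hval x i
    rw [hxy, ← hval y i] at h1
    exact sg_inj (mul_left_cancel₀ (hv i) h1)
  rw [← Finset.card_image_of_injective _ hF]
  apply IsAntichain.sperner
  intro A hA B hB hAB hsub
  simp only [Finset.coe_image, Finset.coe_filter, Finset.mem_univ, true_and, Set.mem_image,
    Set.mem_ofPred_eq] at hA hB
  obtain ⟨x, hx, rfl⟩ := hA
  obtain ⟨y, hy, rfl⟩ := hB
  obtain ⟨j, hj1, hj2⟩ := Finset.exists_of_ssubset (Finset.ssubset_iff_subset_ne.mpr ⟨hsub, hAB⟩)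
  have : ∑ i, v i * sg (x i) < ∑ i, v i * sg (y i) := by
    apply Finset.sum_lt_sum
    · intro i _
      rw [hval x i, hval y i]
      by_cases h : i ∈ F x
      · simp [h, hsub h]
      · rw [if_neg h]; split_ifs
        · linarith [abs_nonneg (v i)]
        · exact le_rfl
    · refine ⟨j, Finset.mem_univ _, ?_⟩
      rw [hval x j, hval y j, if_pos hj1, if_neg hj2]
      linarith [abs_pos.mpr (hv j)]
  linarith

open Classical in
lemma pr_lo {n : ℕ} (v : Fin n → ℝ) (l : ℕ)
    (hl : l ≤ (Finset.univ.filter (fun i => v i ≠ 0)).card) :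
    pr (fun x : Fin n → Bool => ∑ i, v i * sg (x i) = 0) ≤ 1 / √(l + 1) := by
  rw [← pr_equiv (Equiv.piEquivPiSubtypeProd (fun i => v i ≠ 0) (fun _ => Bool)).symm]
  refine pr_prod_le _ _ ?_
  intro y
  have h1 := pr_lo_nonzero (fun i : {i // v i ≠ 0} => v i) (fun i => i.2) 0
  refine le_trans (le_trans (pr_mono ?_) h1) ?_
  · intro x hx
    rw [← Fintype.sum_subtype_add_sum_subtype (fun i => v i ≠ 0)] at hx
    have h2 : ∑ i : {i // ¬ v i ≠ 0}, v i * sg ((Equiv.piEquivPiSubtypeProd (fun i => v i ≠ 0)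
        (fun _ => Bool)).symm (x, y) i) = 0 := by
      refine Finset.sum_eq_zero ?_
      intro i _
      have := i.2
      push Not at this
      rw [this, zero_mul]
    rw [h2, add_zero] at hx
    refine Eq.trans ?_ hx
    refine Finset.sum_congr rfl ?_
    intro i _
    simp [Equiv.piEquivPiSubtypeProd, i.2]
  · rw [Fintype.card_subtype]
    gcongr

/-- The real row of a Boolean matrix. -/
noncomputable def rw_ {n : ℕ} (M : Fin n → Fin n → Bool) (a : Fin n) : Fin n → ℝ :=
  fun b => sg (M a b)

/-- Real sign matrix of a Boolean matrix. -/
noncomputable def sm {n : ℕ} (M : Fin n → Fin n → Bool) : Matrix (Fin n) (Fin n) ℝ :=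
  Matrix.of fun a b => sg (M a b)

/-- A sparse nonzero normal vector to the first `m` rows. -/
def Bad {n : ℕ} (m l : ℕ) (M : Fin n → Fin n → Bool) : Prop :=
  ∃ v : Fin n → ℝ, v ≠ 0 ∧ (Finset.univ.filter (fun i => v i ≠ 0)).card ≤ l + 1 ∧
    ∀ a : Fin n, (a : ℕ) < m → ∑ b, v b * sg (M a b) = 0

/-- Row `j` depends on the previous ones. -/
def Dep {n : ℕ} (j : Fin n) (M : Fin n → Fin n → Bool) : Prop :=
  rw_ M j ∈ Submodule.span ℝ (Set.range (fun i : Fin (j : ℕ) => rw_ M ⟨i, i.2.trans j.2⟩))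

lemma exists_dep {n : ℕ} (M : Fin n → Fin n → Bool) (h : (sm M).det = 0) : ∃ j, Dep j M := by
  classical
  obtain ⟨v, hv, hM⟩ := Matrix.exists_vecMul_eq_zero_iff.mpr h
  have hne : (Finset.univ.filter (fun i => v i ≠ 0)).Nonempty := by
    obtain ⟨i, hi⟩ := Function.ne_iff.mp hv
    exact ⟨i, by simpa using hi⟩
  obtain ⟨j, hj, hmax⟩ := Finset.exists_max_image _ id hne
  simp only [Finset.mem_filter, Finset.mem_univ, true_and, id] at hj hmax
  refine ⟨j, ?_⟩
  have hsum : ∑ i, v i • rw_ M i = 0 := by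
    funext b
    have := congrFun hM b
    simpa [Matrix.vecMul, dotProduct, sm, rw_, Finset.sum_apply] using this
  have hjsum : v j • rw_ M j = - ∑ i ∈ Finset.univ.erase j, v i • rw_ M i := by
    rw [← Finset.add_sum_erase _ _ (Finset.mem_univ j)] at hsum
    exact eq_neg_of_add_eq_zero_left hsum
  unfold Dep
  rw [← Submodule.smul_mem_iff _ hj, hjsum]
  refine Submodule.neg_mem _ (Submodule.sum_mem _ ?_)
  intro i hi
  by_cases hvi : v i = 0
  · simp [hvi]
  · have hij : i < j := lt_of_le_of_ne (hmax i hvi) (Finset.ne_of_mem_erase hi)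
    exact Submodule.smul_mem _ _ (Submodule.subset_span ⟨⟨i, hij⟩, rfl⟩)

lemma dep_update {n : ℕ} (j : Fin n) (M : Fin n → Fin n → Bool) (x : Fin n → Bool) :
    Dep j (Function.update M j x) ↔ (fun b => sg (x b)) ∈
      Submodule.span ℝ (Set.range (fun i : Fin (j : ℕ) => rw_ M ⟨i, i.2.trans j.2⟩)) := by
  unfold Dep
  have h1 : rw_ (Function.update M j x) j = fun b => sg (x b) := by
    funext b; simp [rw_]
  have h2 : (fun i : Fin (j : ℕ) => rw_ (Function.update M j x) ⟨i, i.2.trans j.2⟩)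
      = (fun i : Fin (j : ℕ) => rw_ M ⟨i, i.2.trans j.2⟩) := by
    funext i b
    have : (⟨i, i.2.trans j.2⟩ : Fin n) ≠ j := by
      intro h
      have := congrArg Fin.val h
      have := i.2
      simp at *
      omega
    simp [rw_, Function.update_of_ne this]
  rw [h1, h2]

lemma finrank_prev {n : ℕ} (j : Fin n) (M : Fin n → Fin n → Bool) :
    Module.finrank ℝ (Submodule.span ℝ
      (Set.range (fun i : Fin (j : ℕ) => rw_ M ⟨i, i.2.trans j.2⟩))) ≤ j := by
  have := finrank_range_le_card (R := ℝ) (fun i : Fin (j : ℕ) => rw_ M ⟨i, i.2.trans j.2⟩)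
  simpa [Set.finrank] using this

lemma pr_dep {n : ℕ} (j : Fin n) : pr (Dep j) ≤ 2 ^ (j : ℕ) / 2 ^ n := by
  refine pr_update_le j _ _ (fun M => ?_)
  simp only [dep_update]
  exact pr_subspace _ (finrank_prev j M)

lemma pr_dep_good {n : ℕ} (j : Fin n) (m l : ℕ) (hm : m ≤ j) :
    pr (fun M => Dep j M ∧ ¬ Bad m l M) ≤ 1 / √(l + 1) := by
  classical
  refine pr_update_le j _ _ (fun M => ?_)
  simp only [dep_update]
  set W := Submodule.span ℝ (Set.range (fun i : Fin (j : ℕ) => rw_ M ⟨i, i.2.trans j.2⟩)) with hW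
  have hlt : W < ⊤ := by
    rw [lt_top_iff_ne_top]
    intro h
    have h1 := finrank_prev j M
    rw [← hW, h, finrank_top] at h1
    simp at h1
    have := j.2
    omega
  obtain ⟨f, hf, hker⟩ := Submodule.exists_le_ker_of_lt_top W hlt
  set v : Fin n → ℝ := fun i => f (fun j => if i = j then 1 else 0) with hv
  have hfv : ∀ x, f x = ∑ i, v i * x i := by
    intro x
    rw [LinearMap.pi_apply_eq_sum_univ f x]
    simp [hv, mul_comm]
  have hv0 : v ≠ 0 := by
    intro h
    apply hf
    ext1 x
    ext
    rw [LinearMap.comp_apply, hfv, h]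
    simp
  by_cases hs : (Finset.univ.filter (fun i => v i ≠ 0)).card ≤ l + 1
  · have : pr (fun x => (fun b => sg (x b)) ∈ W ∧ ¬ Bad m l (Function.update M j x))
        ≤ pr (fun _ : Fin n → Bool => False) := by
      refine pr_mono ?_
      rintro x ⟨-, hb⟩
      refine hb ⟨v, hv0, hs, ?_⟩
      intro a ha
      have hne : a ≠ j := by rintro rfl; omega
      rw [Function.update_of_ne hne]
      have hmem : rw_ M a ∈ W := Submodule.subset_span ⟨⟨a, by omega⟩, rfl⟩
      have := hker hmem
      rw [LinearMap.mem_ker, hfv] at this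
      exact this
    refine this.trans ?_
    simp only [pr, if_false, Finset.sum_const_zero, zero_div]
    positivity
  · refine le_trans (pr_mono ?_) (pr_lo v l (by omega))
    rintro x ⟨hx, -⟩
    have := hker hx
    rw [LinearMap.mem_ker, hfv] at this
    exact this

/-- Column `p` lies in the span of the columns in `T`, up to coordinates `≥ m`. -/
def ColDep {n : ℕ} (m : ℕ) (T : Finset (Fin n)) (p : Fin n) (N : Fin n → Fin n → Bool) : Prop :=
  rw_ N p ∈ Submodule.span ℝ (((T.image (rw_ N)) ∪
    (Finset.univ.filter (fun a : Fin n => m ≤ a)).image (fun a => Pi.single a (1 : ℝ)) :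
      Finset (Fin n → ℝ)) : Set (Fin n → ℝ))

lemma pr_colDep {m k : ℕ} (T : Finset (Fin (m + k))) (p : Fin (m + k)) (hp : p ∉ T) :
    pr (ColDep m T p) ≤ 2 ^ (T.card + k) / 2 ^ (m + k) := by
  classical
  refine pr_update_le p _ _ (fun N => ?_)
  have himg : ∀ x, T.image (rw_ (Function.update N p x)) = T.image (rw_ N) := by
    intro x
    refine Finset.image_congr ?_
    intro t ht
    have : t ≠ p := by rintro rfl; exact hp ht
    funext b
    simp [rw_, Function.update_of_ne this]
  have hrow : ∀ x, rw_ (Function.update N p x) p = fun b => sg (x b) := by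
    intro x; funext b; simp [rw_]
  simp only [ColDep, himg, hrow]
  refine pr_subspace _ ?_
  refine (finrank_span_finset_le_card _).trans ?_
  refine (Finset.card_union_le _ _).trans ?_
  refine Nat.add_le_add Finset.card_image_le (Finset.card_image_le.trans ?_)
  have h1 : (Finset.univ.filter (fun a : Fin (m + k) => m ≤ a)) ⊆
      Finset.univ.image (Fin.natAdd m : Fin k → Fin (m + k)) := by
    intro a ha
    simp only [Finset.mem_filter, Finset.mem_univ, true_and] at ha
    simp only [Finset.mem_image, Finset.mem_univ, true_and]
    exact ⟨⟨a - m, by omega⟩, by ext; simp; omega⟩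
  exact (Finset.card_le_card h1).trans (Finset.card_image_le.trans (by simp))

lemma bad_colDep {n m l : ℕ} (hl : l < n) (M : Fin n → Fin n → Bool) (h : Bad m l M) :
    ∃ q ∈ (Finset.univ ×ˢ Finset.powersetCard l Finset.univ :
      Finset (Fin n × Finset (Fin n))), q.1 ∉ q.2 ∧ ColDep m q.2 q.1 (fun a b => M b a) := by
  classical
  obtain ⟨v, hv, hs, hM⟩ := h
  obtain ⟨p, hp⟩ := Function.ne_iff.mp hv
  simp only [Pi.zero_apply] at hp
  obtain ⟨T, hT1, hT2, hT3⟩ := Finset.exists_subsuperset_card_eq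
    (s := (Finset.univ.filter (fun i => v i ≠ 0)).erase p) (t := Finset.univ.erase p) (n := l)
    (Finset.erase_subset_erase _ (Finset.subset_univ _))
    (by rw [Finset.card_erase_of_mem (by simpa using hp)]; omega)
    (by rw [Finset.card_erase_of_mem (Finset.mem_univ _)]; simp; omega)
  have hpT : p ∉ T := fun h => by simpa using hT2 h
  refine ⟨(p, T), by simp [Finset.mem_powersetCard, hT3], hpT, ?_⟩
  set N : Fin n → Fin n → Bool := fun a b => M b a with hN
  unfold ColDep
  simp only
  set S := Submodule.span ℝ (((T.image (rw_ N)) ∪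
    (Finset.univ.filter (fun a : Fin n => m ≤ a)).image (fun a => Pi.single a (1 : ℝ)) :
      Finset (Fin n → ℝ)) : Set (Fin n → ℝ)) with hS
  have htot : ∑ i, v i • rw_ N i ∈ S := by
    rw [pi_eq_sum_univ' (∑ i, v i • rw_ N i)]
    refine Submodule.sum_mem _ ?_
    intro a _
    by_cases ha : (a : ℕ) < m
    · have : (∑ i, v i • rw_ N i) a = 0 := by
        rw [← hM a ha]
        simp [Finset.sum_apply, rw_, hN]
      rw [this, zero_smul]
      exact Submodule.zero_mem _
    · refine Submodule.smul_mem _ _ (Submodule.subset_span ?_)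
      rw [Finset.mem_coe, Finset.mem_union]
      right
      refine Finset.mem_image.mpr ⟨a, by simpa using ha, ?_⟩
      funext b
      simp [Pi.single_apply]
  rw [← Submodule.smul_mem_iff _ hp]
  have hrest : ∑ i ∈ Finset.univ.erase p, v i • rw_ N i ∈ S := by
    refine Submodule.sum_mem _ ?_
    intro i hi
    by_cases hvi : v i = 0
    · simp [hvi]
    · refine Submodule.smul_mem _ _ (Submodule.subset_span ?_)
      rw [Finset.mem_coe, Finset.mem_union]
      left
      refine Finset.mem_image_of_mem _ (hT1 ?_)
      simp [hvi, Finset.ne_of_mem_erase hi]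
  rw [← Finset.add_sum_erase _ _ (Finset.mem_univ p)] at htot
  exact (Submodule.add_mem_iff_left _ hrest).mp htot

lemma pr_bad {m k l : ℕ} (hl : l < m + k) :
    pr (Bad (n := m + k) m l) ≤
      ((m + k : ℕ) : ℝ) ^ (l + 1) * (2 ^ (l + k) / 2 ^ (m + k)) := by
  classical
  refine (pr_mono (bad_colDep hl)).trans ((pr_exists _ _).trans ?_)
  have hb : ∀ q ∈ (Finset.univ ×ˢ Finset.powersetCard l Finset.univ :
      Finset (Fin (m + k) × Finset (Fin (m + k)))),
      pr (fun M : Fin (m + k) → Fin (m + k) → Bool =>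
        q.1 ∉ q.2 ∧ ColDep m q.2 q.1 (fun a b => M b a)) ≤ 2 ^ (l + k) / 2 ^ (m + k) := by
    rintro ⟨p, T⟩ hq
    have hT : T.card = l := by simpa [Finset.mem_powersetCard] using hq
    by_cases hp : p ∈ T
    · simp only [hp, not_true, false_and, pr, if_false, Finset.sum_const_zero, zero_div]
      positivity
    · have h1 := pr_colDep T p hp
      rw [hT] at h1
      rw [← pr_equiv (Equiv.piComm (fun _ _ : Fin (m + k) => Bool))] at h1
      exact (pr_mono (fun M hM => hM.2)).trans h1
  refine (Finset.sum_le_sum hb).trans ?_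
  rw [Finset.sum_const, nsmul_eq_mul]
  gcongr
  rw [Finset.card_product, Finset.card_powersetCard, Finset.card_univ, Fintype.card_fin, pow_succ']
  exact_mod_cast Nat.mul_le_mul_left _ (Nat.choose_le_pow _ _)

lemma pr_sing {m k l : ℕ} (hl : l < m + k) :
    pr (fun M : Fin (m + k) → Fin (m + k) → Bool => (sm M).det = 0) ≤
      ((m + k : ℕ) : ℝ) ^ (l + 1) * (2 ^ (l + k) / 2 ^ (m + k)) +
      (1 / 2 ^ k + k * (1 / √(l + 1))) := by
  have h1 : pr (fun M : Fin (m + k) → Fin (m + k) → Bool => (sm M).det = 0) ≤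
      pr (fun M => Bad (n := m + k) m l M ∨
        ∃ j ∈ (Finset.univ : Finset (Fin (m + k))), (Dep j M ∧ ¬ Bad m l M)) := by
    refine pr_mono ?_
    intro M hM
    by_cases hb : Bad m l M
    · exact Or.inl hb
    · obtain ⟨j, hj⟩ := exists_dep M hM
      exact Or.inr ⟨j, Finset.mem_univ _, hj, hb⟩
  refine h1.trans ((pr_or _ _).trans (add_le_add (pr_bad hl) ((pr_exists _ _).trans ?_)))
  have h2 : ∀ j : Fin (m + k), pr (fun M => Dep j M ∧ ¬ Bad m l M) ≤
      (fun j : ℕ => if j < m then (2 : ℝ) ^ j / 2 ^ (m + k) else 1 / √(l + 1)) j := by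
    intro j
    dsimp only
    split_ifs with h
    · exact (pr_mono (fun M hM => hM.1)).trans (pr_dep j)
    · exact pr_dep_good j m l (by omega)
  refine (Finset.sum_le_sum (fun j _ => h2 j)).trans ?_
  rw [Fin.sum_univ_eq_sum_range
    (fun j : ℕ => if j < m then (2 : ℝ) ^ j / 2 ^ (m + k) else 1 / √(l + 1)), Finset.sum_range_add]
  refine add_le_add ?_ ?_
  · rw [Finset.sum_congr rfl (fun x hx => if_pos (Finset.mem_range.mp hx)), ← Finset.sum_div,
      geom_sum_eq (by norm_num), pow_add]
    rw [div_le_div_iff₀ (by positivity) (by positivity)]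
    have : (0 : ℝ) < 2 ^ k := by positivity
    norm_num
  · simp

lemma pr_sing_tendsto : Filter.Tendsto
    (fun n : ℕ => pr (fun M : Fin n → Fin n → Bool => (sm M).det = 0)) Filter.atTop (nhds 0) := by
  rw [Metric.tendsto_atTop]
  intro ε hε
  obtain ⟨k, hk⟩ : ∃ k : ℕ, (1 / 2 : ℝ) ^ k < ε / 3 :=
    exists_pow_lt_of_lt_one (by positivity) (by norm_num)
  have hlim : Filter.Tendsto (fun l : ℕ => (k : ℝ) * (1 / √((l : ℝ) + 1))) Filter.atTop
      (nhds 0) := by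
    have h1 : Filter.Tendsto (fun l : ℕ => √((l : ℝ) + 1)) Filter.atTop Filter.atTop :=
      Real.tendsto_sqrt_atTop.comp
        (Filter.tendsto_atTop_add_const_right _ _ tendsto_natCast_atTop_atTop)
    have h2 := (tendsto_inv_atTop_zero.comp h1).const_mul (k : ℝ)
    simpa [Function.comp_def] using h2
  obtain ⟨l, hl⟩ := (hlim.eventually_lt_const (show 0 < ε / 3 by positivity)).exists
  have h3 : Filter.Tendsto (fun n : ℕ => ((n : ℝ) ^ (l + 1) / 2 ^ n) * 2 ^ (l + k)) Filter.atTop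
      (nhds 0) := by
    simpa using (tendsto_pow_const_div_const_pow_of_one_lt (l + 1)
      (by norm_num : (1 : ℝ) < 2)).mul_const (2 ^ (l + k))
  obtain ⟨n0, hn0⟩ := Filter.eventually_atTop.mp
    (h3.eventually_lt_const (show 0 < ε / 3 by positivity))
  refine ⟨n0 + l + 1 + k, ?_⟩
  intro n hn
  obtain ⟨m, rfl⟩ : ∃ m, n = m + k := ⟨n - k, by omega⟩
  rw [Real.dist_eq, sub_zero, abs_of_nonneg (pr_nonneg _)]
  have hmain := pr_sing (m := m) (k := k) (l := l) (by omega)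
  have h4 := hn0 (m + k) (by omega)
  rw [_root_.one_div_pow] at hk
  have h5 : ((m + k : ℕ) : ℝ) ^ (l + 1) * (2 ^ (l + k) / 2 ^ (m + k)) =
    (((m + k : ℕ) : ℝ) ^ (l + 1) / 2 ^ (m + k)) * 2 ^ (l + k) := by ring
  rw [h5] at hmain
  linarith

lemma sm_injective {n : ℕ} : Function.Injective (sm (n := n)) := by
  intro M N h
  funext a b
  exact sg_inj (by simpa [sm] using congrFun (congrFun h a) b)

lemma card_sign {n : ℕ} (P : Matrix (Fin n) (Fin n) ℝ → Prop) :
    (Nat.card {C : Matrix (Fin n) (Fin n) ℝ // IsSignMatrix C ∧ P C} : ℝ) =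
      pr (fun M : Fin n → Fin n → Bool => P (sm M)) *
        Fintype.card (Fin n → Fin n → Bool) := by
  classical
  have h1 : {C : Matrix (Fin n) (Fin n) ℝ | IsSignMatrix C ∧ P C} = sm '' {M | P (sm M)} := by
    ext C
    constructor
    · rintro ⟨hC, hP⟩
      have : sm (fun a b => decide (C a b = 1)) = C := by
        ext a b
        rcases hC a b with h | h
        · simp [sm, sg, h]
        · simp [sm, sg, h]; norm_num
      exact ⟨fun a b => decide (C a b = 1), by simpa [this] using hP, this⟩
    · rintro ⟨M, hM, rfl⟩
      refine ⟨fun a b => ?_, hM⟩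
      cases h : M a b <;> simp [sm, sg, h]
  have h2 := Nat.card_image_of_injective sm_injective {M : Fin n → Fin n → Bool | P (sm M)}
  rw [← h1] at h2
  have h3 : Nat.card {C : Matrix (Fin n) (Fin n) ℝ // IsSignMatrix C ∧ P C} =
      Nat.card {M : Fin n → Fin n → Bool // P (sm M)} := h2
  rw [h3, pr_eq_card, Nat.card_eq_fintype_card, Fintype.card_subtype, div_mul_cancel₀]
  exact_mod_cast Fintype.card_ne_zero

lemma sg_beq (a b : Bool) : sg (a == b) = sg a * sg b := by
  cases a <;> cases b <;> simp [sg]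

lemma pr_updateCol {n : ℕ} (i : Fin n) :
    pr (fun M : Fin n → Fin n → Bool => ((sm M).updateCol i 1).det = 0) =
      pr (fun M : Fin n → Fin n → Bool => (sm M).det = 0) := by
  classical
  let φ : (Fin n → Fin n → Bool) → (Fin n → Fin n → Bool) :=
    fun M a b => if b = i then M a i else (M a b == M a i)
  have hφ : Function.Involutive φ := by
    intro M
    funext a b
    by_cases h : b = i
    · simp [φ, h]
    · simp only [φ, h, if_false, if_true]
      cases M a b <;> cases M a i <;> rfl
  rw [← pr_equiv (hφ.toPerm φ) (fun M => (sm M).det = 0)]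
  congr 1
  funext M
  have h1 : sm (φ M) = Matrix.of (fun a b => sg (M a i) * ((sm M).updateCol i 1) a b) := by
    ext a b
    by_cases h : b = i
    · subst h; simp [sm, φ]
    · simp [sm, φ, h, sg_beq, Matrix.updateCol_ne, mul_comm]
  have h2 : (sm (hφ.toPerm φ M)).det = (∏ a, sg (M a i)) * ((sm M).updateCol i 1).det := by
    change (sm (φ M)).det = _
    rw [h1, Matrix.det_mul_column]
  rw [h2, mul_eq_zero, or_iff_right]
  exact Finset.prod_ne_zero_iff.mpr (fun a _ => sg_ne _)

lemma pr_not {α : Type*} [Fintype α] [Nonempty α] (E : α → Prop) :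
    1 ≤ pr E + pr (fun x => ¬ E x) := by
  refine le_trans ?_ (pr_or E (fun x => ¬ E x))
  have : (Fintype.card α : ℝ) ≠ 0 := by exact_mod_cast Fintype.card_ne_zero
  simp [pr, em, this]

lemma qn_le {n : ℕ} (i : Fin n)
    (h : pr (fun M : Fin n → Fin n → Bool => (sm M).det = 0) ≤ 1 / 2) :
    qn n i ≤ 2 * pr (fun M : Fin n → Fin n → Bool => (sm M).det = 0) := by
  have hc : (0 : ℝ) < Fintype.card (Fin n → Fin n → Bool) := by exact_mod_cast Fintype.card_pos
  unfold qn
  rw [card_sign (fun C => IsUnit C ∧ (C⁻¹ *ᵥ (1 : Fin n → ℝ)) i = 0), card_sign (fun C => IsUnit C),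
    mul_div_mul_right _ _ hc.ne']
  have h1 : pr (fun M : Fin n → Fin n → Bool =>
      IsUnit (sm M) ∧ ((sm M)⁻¹ *ᵥ (1 : Fin n → ℝ)) i = 0) ≤
      pr (fun M : Fin n → Fin n → Bool => (sm M).det = 0) := by
    rw [← pr_updateCol i]
    refine pr_mono ?_
    rintro M ⟨hu, h0⟩
    have hd : IsUnit (sm M).det := (Matrix.isUnit_iff_isUnit_det _).mp hu
    rw [← Matrix.cramer_apply, Matrix.cramer_eq_adjugate_mulVec]
    rw [Matrix.inv_def, Matrix.smul_mulVec, Pi.smul_apply, smul_eq_mul, mul_eq_zero] at h0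
    refine h0.resolve_left ?_
    rw [Ring.inverse_eq_inv']
    exact inv_ne_zero hd.ne_zero
  have h2 := pr_not (fun M : Fin n → Fin n → Bool => (sm M).det = 0)
  have h3 : pr (fun M : Fin n → Fin n → Bool => ¬ (sm M).det = 0) =
      pr (fun M : Fin n → Fin n → Bool => IsUnit (sm M)) := by
    congr 1
    funext M
    rw [Matrix.isUnit_iff_isUnit_det, isUnit_iff_ne_zero]
  rw [h3] at h2
  have h4 := pr_nonneg (fun M : Fin n → Fin n → Bool => (sm M).det = 0)
  rw [div_le_iff₀ (by linarith)]
  nlinarith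

/-- Lemma (Lemma `lemma-aux2`): `lim_{n→∞} max_{1≤i≤n} q_n(i) = 0`. -/
theorem qn_max_tendsto_zero :
    Filter.Tendsto (fun n : ℕ => ⨆ i : Fin n, qn n i) Filter.atTop (nhds 0) := by
  have h2 : Filter.Tendsto (fun n : ℕ =>
      2 * pr (fun M : Fin n → Fin n → Bool => (sm M).det = 0)) Filter.atTop (nhds 0) := by
    simpa using pr_sing_tendsto.const_mul 2
  refine tendsto_of_tendsto_of_tendsto_of_le_of_le' tendsto_const_nhds h2 ?_ ?_
  · refine Filter.Eventually.of_forall (fun n => Real.iSup_nonneg (fun i => ?_))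
    unfold qn
    positivity
  · filter_upwards [pr_sing_tendsto.eventually_le_const (show (0 : ℝ) < 1 / 2 by norm_num)]
      with n hn
    exact Real.iSup_le (fun i => qn_le i hn) (mul_nonneg (by norm_num) (pr_nonneg _))
end

section
/- Let r_n be the proportion, among all invertible n×n sign matrices C, of those satisfying (C⁻¹𝟙)_i > 0 for all i. Then r_n ∼ 1/2ⁿ, that is, lim_{n→∞} 2ⁿ · r_n = 1. -/
open Matrix

/-- `r_n`: the proportion, among all invertible `n×n` sign matrices `C`, of those
with `(C⁻¹𝟙)_i > 0` for all `i`. -/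
noncomputable def rn (n : ℕ) : ℝ :=
  (Nat.card {C : Matrix (Fin n) (Fin n) ℝ //
      IsSignMatrix C ∧ IsUnit C ∧ ∀ i, 0 < (C⁻¹ *ᵥ (1 : Fin n → ℝ)) i} : ℝ) /
  (Nat.card {C : Matrix (Fin n) (Fin n) ℝ // IsSignMatrix C ∧ IsUnit C} : ℝ)

section PartPA
open Finset
set_option linter.unusedSectionVars false
set_option linter.style.haveILetI false

namespace RN

section A
variable {F : Type*} [Field F] [Fintype F] [DecidableEq F]
variable {ι : Type*} [Fintype ι] [DecidableEq ι]
variable {L : Type*} [Fintype L] [DecidableEq L]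

/-- The set of label vectors `x` whose image under `φ` is orthogonal to `v`. -/
def orth (φ : L → F) (v : ι → F) : Finset (ι → L) :=
  univ.filter (fun x => ∑ j, φ (x j) * v j = 0)

/-- Probability that the image of a uniform label vector is orthogonal to `v`. -/
noncomputable def pr (φ : L → F) (v : ι → F) : ℝ :=
  ((orth φ v).card : ℝ) / (Fintype.card L : ℝ) ^ (Fintype.card ι)

/-- Linear functional attached to a label vector. -/
def fnl (φ : L → F) (x : ι → L) : (ι → F) →ₗ[F] F :=
  ∑ j, φ (x j) • LinearMap.proj j

lemma fnl_apply (φ : L → F) (x : ι → L) (v : ι → F) : fnl φ x v = ∑ j, φ (x j) * v j := by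
  simp [fnl]

/-- Coordinates that form a basis of the dual of a subspace. -/
lemma exists_coords (W : Submodule F (ι → F)) :
    ∃ J : Finset ι, J.card = Module.finrank F W ∧
      LinearIndependent F (fun j : J => (LinearMap.proj (j : ι) : (ι → F) →ₗ[F] F) ∘ₗ W.subtype) := by
  classical
  set f : ι → Module.Dual F W := fun j => (LinearMap.proj j : (ι → F) →ₗ[F] F) ∘ₗ W.subtype with hf
  have hspan : Submodule.span F (Set.range f) = ⊤ := by
    rw [eq_top_iff]
    rintro g -
    obtain ⟨g', hg'⟩ := LinearMap.exists_extend g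
    have : g = ∑ j, g' (fun k => if j = k then 1 else 0) • f j := by
      rw [← hg']
      ext w
      simp only [LinearMap.comp_apply, LinearMap.sum_apply, LinearMap.smul_apply, hf,
        Submodule.subtype_apply, LinearMap.proj_apply, smul_eq_mul]
      rw [LinearMap.pi_apply_eq_sum_univ g' w]
      exact Finset.sum_congr rfl fun j _ => by rw [smul_eq_mul, mul_comm]
    rw [this]
    exact Submodule.sum_mem _ fun j _ => Submodule.smul_mem _ _ (Submodule.subset_span ⟨j, rfl⟩)
  obtain ⟨κ, a, hinj, hsp, hli⟩ := exists_linearIndependent' F f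
  haveI : Fintype κ := Fintype.ofInjective a hinj
  refine ⟨univ.image a, ?_, ?_⟩
  · rw [Finset.card_image_of_injective _ hinj, Finset.card_univ,
      ← finrank_span_eq_card hli, hsp, hspan, finrank_top, Subspace.dual_finrank_eq]
  · have e2 : ∃ e : κ ≃ (univ.image a : Finset ι), ∀ k, (e k : ι) = a k :=
      ⟨Equiv.ofBijective (fun k => ⟨a k, by simp⟩) ⟨fun x y h => hinj (by simpa using h), by
        rintro ⟨j, hj⟩
        obtain ⟨k, -, hk⟩ := Finset.mem_image.1 hj
        exact ⟨k, by simpa using hk⟩⟩, fun k => rfl⟩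
    obtain ⟨e, he⟩ := e2
    refine (linearIndependent_equiv' e ?_).1 hli
    ext k
    simp [hf, he]

open Classical in
/-- Odlyzko-type bound. -/
lemma odlyzko (φ : L → F) (M : ℕ) (hM : ∀ a, (univ.filter (fun l => φ l = a)).card ≤ M)
    (W : Submodule F (ι → F)) :
    (univ.filter (fun x : ι → L => W ≤ LinearMap.ker (fnl φ x))).card
      * (Fintype.card L) ^ (Module.finrank F W)
      ≤ M ^ (Module.finrank F W) * (Fintype.card L) ^ (Fintype.card ι) := by
  obtain ⟨J, hJ, hli⟩ := exists_coords W
  rw [← hJ]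
  set A := univ.filter (fun x : ι → L => W ≤ LinearMap.ker (fnl φ x)) with hA
  have key : ∀ x ∈ A, ∀ y ∈ A, (∀ j, j ∉ J → x j = y j) → ∀ j ∈ J, φ (x j) = φ (y j) := by
    intro x hx y hy hxy j hj
    simp only [hA, mem_filter, mem_univ, true_and] at hx hy
    have h0 : ∑ j : J, (φ (x j) - φ (y j)) •
        ((LinearMap.proj (j : ι) : (ι → F) →ₗ[F] F) ∘ₗ W.subtype) = 0 := by
      ext w
      have h1 := hx w.2
      have h2 := hy w.2
      rw [LinearMap.mem_ker, fnl_apply] at h1 h2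
      simp only [LinearMap.sum_apply, LinearMap.smul_apply, LinearMap.comp_apply,
        LinearMap.proj_apply, Submodule.subtype_apply, smul_eq_mul, LinearMap.zero_apply]
      rw [Finset.sum_coe_sort J (fun j => (φ (x j) - φ (y j)) * (w : ι → F) j)]
      rw [Finset.sum_subset (subset_univ J)]
      · simp only [sub_mul, Finset.sum_sub_distrib, h1, h2, sub_zero]
      · intro k _ hk
        simp [hxy k hk]
    have := Fintype.linearIndependent_iff.1 hli _ h0 ⟨j, hj⟩
    exact sub_eq_zero.1 this
  let r : (ι → L) → ({j // j ∉ J} → L) := fun x j => x j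
  have hfib : ∀ b ∈ (univ : Finset ({j // j ∉ J} → L)), (A.filter (fun x => r x = b)).card ≤ M ^ J.card := by
    intro b _
    rcases (A.filter (fun x => r x = b)).eq_empty_or_nonempty with h | ⟨x, hx⟩
    · simp [h]
    · have hx' := mem_filter.1 hx
      calc (A.filter (fun x => r x = b)).card
          ≤ (Fintype.piFinset (fun j : J => univ.filter (fun l => φ l = φ (x j)))).card := by
            refine Finset.card_le_card_of_injOn (fun y j => y j) ?_ ?_
            · intro y hy
              have hy' := mem_filter.1 hy
              simp only [mem_coe, Fintype.mem_piFinset, mem_filter, mem_univ, true_and]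
              intro j
              refine key y hy'.1 x hx'.1 ?_ j j.2
              intro k hk
              have := congrFun (hy'.2.trans hx'.2.symm) ⟨k, hk⟩
              exact this
            · intro y hy z hz hyz
              have hy' := mem_filter.1 hy
              have hz' := mem_filter.1 hz
              ext k
              by_cases hk : k ∈ J
              · exact congrFun hyz ⟨k, hk⟩
              · exact congrFun (hy'.2.trans hz'.2.symm) ⟨k, hk⟩
        _ ≤ M ^ J.card := by
            rw [Fintype.card_piFinset]
            calc _ ≤ ∏ _j : J, M := Finset.prod_le_prod' fun j _ => hM _
              _ = _ := by simp
  have hc := Finset.card_le_mul_card_image_of_maps_to (f := r) (s := A) (t := univ) (fun _ _ => mem_univ _) _ hfib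
  have hcard : Fintype.card ι = Fintype.card {j // j ∉ J} + J.card := by
    rw [Fintype.card_subtype_compl, Fintype.card_coe]
    have := J.card_le_univ
    omega
  rw [hcard, pow_add]
  rw [Finset.card_univ, Fintype.card_fun] at hc
  calc _ ≤ (M ^ J.card * Fintype.card L ^ Fintype.card { j // j ∉ J }) * Fintype.card L ^ J.card :=
        Nat.mul_le_mul_right _ hc
    _ = _ := by ring

lemma pr_nonneg (φ : L → F) (v : ι → F) : 0 ≤ pr φ v := by unfold pr; positivity

lemma pr_le_one [Nonempty L] (φ : L → F) (v : ι → F) : pr φ v ≤ 1 := by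
  unfold pr
  have : 0 < Fintype.card L := Fintype.card_pos
  rw [div_le_one (by positivity)]
  have := Finset.card_le_univ (orth φ v)
  rw [Fintype.card_fun] at this
  exact_mod_cast this

lemma card_inf_ker (W : Submodule F (ι → F)) (l : (ι → F) →ₗ[F] F) (h : ¬ W ≤ LinearMap.ker l) :
    Nat.card (W ⊓ LinearMap.ker l : Submodule F (ι → F)) * Fintype.card F = Nat.card W := by
  set g : W →ₗ[F] F := l ∘ₗ W.subtype with hg
  have hg0 : g ≠ 0 := by
    intro h0
    apply h
    intro w hw
    have := LinearMap.congr_fun h0 ⟨w, hw⟩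
    simpa [hg] using this
  have hsurj : Function.Surjective g := LinearMap.surjective hg0
  have h1 : Nat.card (LinearMap.ker g) * Fintype.card F = Nat.card W := by
    have := Submodule.card_eq_card_quotient_mul_card (LinearMap.ker g)
    rw [this, Nat.card_congr (g.quotKerEquivOfSurjective hsurj).toEquiv, Nat.card_eq_fintype_card (α := F)]
  have h2 : Nat.card (W ⊓ LinearMap.ker l : Submodule F (ι → F)) = Nat.card (LinearMap.ker g) := by
    refine Nat.card_congr ⟨fun x => ⟨⟨x.1, x.2.1⟩, by simpa [hg] using x.2.2⟩,
      fun y => ⟨y.1.1, y.1.2, y.2⟩, fun x => rfl, fun y => rfl⟩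
  rw [h2, h1]

open Classical in
lemma moment_bound [Nonempty L] (φ : L → F) (M : ℕ)
    (hM : ∀ a, (univ.filter (fun l => φ l = a)).card ≤ M) (hML : M ≤ Fintype.card L)
    (d₀ m : ℕ) (W : Submodule F (ι → F)) :
    ∑ v ∈ univ.filter (fun v => v ∈ W), pr φ v ^ m ≤
      (1 / (Fintype.card F : ℝ) + ((M : ℝ) / Fintype.card L) ^ d₀) ^ m * Nat.card W
        + (Fintype.card F : ℝ) ^ d₀ := by
  have hcW : ∀ W : Submodule F (ι → F), ((univ.filter (fun v => v ∈ W)).card : ℝ) = Nat.card W := by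
    intro W
    rw [Nat.card_eq_fintype_card, Fintype.card_subtype]
  have hLpos : 0 < (Fintype.card L : ℝ) := by exact_mod_cast Fintype.card_pos
  have hFpos : 0 < (Fintype.card F : ℝ) := by exact_mod_cast Fintype.card_pos
  have hF1 : 1 ≤ (Fintype.card F : ℝ) := by exact_mod_cast Fintype.card_pos
  set q : ℝ := (M : ℝ) / Fintype.card L with hq
  have hq0 : 0 ≤ q := by positivity
  have hq1 : q ≤ 1 := by rw [hq, div_le_one hLpos]; exact_mod_cast hML
  set a : ℝ := 1 / (Fintype.card F : ℝ) + q ^ d₀ with ha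
  have ha0 : 0 ≤ a := by positivity
  induction m generalizing W with
  | zero => simp only [pow_zero, one_mul, sum_const, nsmul_eq_mul, mul_one, hcW]; linarith [pow_pos hFpos d₀]
  | succ m ih =>
    by_cases hd : Module.finrank F W < d₀
    · calc ∑ v ∈ univ.filter (fun v => v ∈ W), pr φ v ^ (m+1)
          ≤ ∑ v ∈ univ.filter (fun v => v ∈ W), 1 :=
            sum_le_sum fun v _ => pow_le_one₀ (pr_nonneg _ _) (pr_le_one _ _)
        _ = Nat.card W := by rw [← hcW]; simp
        _ = (Fintype.card F : ℝ) ^ Module.finrank F W := by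
            rw [Nat.card_eq_fintype_card, Module.card_eq_pow_finrank (K := F)]; push_cast; rfl
        _ ≤ (Fintype.card F : ℝ) ^ d₀ := pow_le_pow_right₀ hF1 hd.le
        _ ≤ _ := by linarith [show 0 ≤ a ^ (m+1) * (Nat.card W : ℝ) by positivity]
    · push Not at hd
      set N : ℝ := (Fintype.card L : ℝ) ^ (Fintype.card ι) with hN
      have hNpos : 0 < N := by positivity
      have hcu : ((univ : Finset (ι → L)).card : ℝ) = N := by
        rw [Finset.card_univ, Fintype.card_fun]; push_cast; rfl
      have e1 : ∑ v ∈ univ.filter (fun v => v ∈ W), pr φ v ^ (m+1)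
          = N⁻¹ * ∑ x : ι → L, ∑ v ∈ univ.filter (fun v => v ∈ W ⊓ LinearMap.ker (fnl φ x)), pr φ v ^ m := by
        have : ∀ x : ι → L, ∑ v ∈ univ.filter (fun v => v ∈ W ⊓ LinearMap.ker (fnl φ x)), pr φ v ^ m
            = ∑ v ∈ univ.filter (fun v => v ∈ W), if fnl φ x v = 0 then pr φ v ^ m else 0 := by
          intro x
          rw [← Finset.sum_filter, Finset.filter_filter]
          simp only [Submodule.mem_inf, LinearMap.mem_ker]
        simp only [this]
        rw [Finset.sum_comm, Finset.mul_sum]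
        refine Finset.sum_congr rfl fun v _ => ?_
        rw [← Finset.sum_filter, sum_const, nsmul_eq_mul, pow_succ]
        have : (univ.filter (fun x : ι → L => fnl φ x v = 0)) = orth φ v := by
          unfold orth; simp only [fnl_apply]
        rw [this]
        unfold pr
        rw [← hN]
        field_simp
      have e2 : ∑ x : ι → L, (Nat.card (W ⊓ LinearMap.ker (fnl φ x) : Submodule F (ι → F)) : ℝ)
          ≤ N * (a * Nat.card W) := by
        have : ∀ x : ι → L, (Nat.card (W ⊓ LinearMap.ker (fnl φ x) : Submodule F (ι → F)) : ℝ)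
            ≤ Nat.card W / Fintype.card F + if W ≤ LinearMap.ker (fnl φ x) then (Nat.card W : ℝ) else 0 := by
          intro x
          split_ifs with h
          · rw [inf_eq_left.2 h]
            have : 0 ≤ (Nat.card W : ℝ) / Fintype.card F := by positivity
            linarith
          · have := card_inf_ker W _ h
            rw [← this]; push_cast
            field_simp
            simp
        refine (Finset.sum_le_sum fun x _ => this x).trans ?_
        rw [Finset.sum_add_distrib, ← Finset.sum_filter, sum_const, sum_const, nsmul_eq_mul,
          nsmul_eq_mul, hcu]
        have ho := odlyzko φ M hM W
        have ho' : ((univ.filter (fun x : ι → L => W ≤ LinearMap.ker (fnl φ x))).card : ℝ)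
            ≤ q ^ Module.finrank F W * N := by
          rw [hq, hN, div_pow, div_mul_eq_mul_div, le_div_iff₀ (by positivity)]
          exact_mod_cast ho
        have h3 : q ^ Module.finrank F W ≤ q ^ d₀ := pow_le_pow_of_le_one hq0 hq1 hd
        have h4 : ((univ.filter (fun x : ι → L => W ≤ LinearMap.ker (fnl φ x))).card : ℝ) ≤ q ^ d₀ * N :=
          ho'.trans (mul_le_mul_of_nonneg_right h3 hNpos.le)
        have h5 := mul_le_mul_of_nonneg_right h4 (show 0 ≤ (Nat.card W : ℝ) by positivity)
        calc _ ≤ N * (Nat.card W / Fintype.card F) + q ^ d₀ * N * Nat.card W := by linarith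
          _ = _ := by rw [ha]; ring
      rw [e1]
      calc _ ≤ N⁻¹ * ∑ x : ι → L, (a ^ m * Nat.card (W ⊓ LinearMap.ker (fnl φ x) : Submodule F (ι → F)) + (Fintype.card F : ℝ) ^ d₀) := by
            gcongr with x; exact ih _
        _ = N⁻¹ * (a ^ m * ∑ x : ι → L, (Nat.card (W ⊓ LinearMap.ker (fnl φ x) : Submodule F (ι → F)) : ℝ) + N * (Fintype.card F : ℝ) ^ d₀) := by
            rw [Finset.sum_add_distrib, ← Finset.mul_sum, sum_const, nsmul_eq_mul, hcu]
        _ ≤ N⁻¹ * (a ^ m * (N * (a * Nat.card W)) + N * (Fintype.card F : ℝ) ^ d₀) := by gcongr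
        _ = _ := by field_simp; ring

end A
end RN

end PartPA

section PartPC
open Finset
set_option linter.unusedSectionVars false
set_option linter.style.haveILetI false

namespace RN

section C
variable {p : ℕ} [Fact p.Prime]
variable {ι : Type*} [Fintype ι] [DecidableEq ι]
variable {L : Type*} [Fintype L] [DecidableEq L]

/-- The standard additive character. -/
noncomputable def χ (a : ZMod p) : ℂ := ZMod.stdAddChar a

lemma chi_add (a b : ZMod p) : χ (a + b) = χ a * χ b := by
  unfold χ; exact AddChar.map_add_eq_mul _ _ _

lemma chi_neg (a : ZMod p) : χ (-a) = (starRingEnd ℂ) (χ a) := by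
  unfold χ; exact AddChar.map_neg_eq_conj _ _

lemma chi_zero : χ (0 : ZMod p) = 1 := by
  unfold χ; exact AddChar.map_zero_eq_one _

lemma chi_fsum {κ : Type*} (s : Finset κ) (f : κ → ZMod p) : χ (∑ i ∈ s, f i) = ∏ i ∈ s, χ (f i) := by
  classical
  induction s using Finset.induction_on with
  | empty => simp [chi_zero]
  | insert a s ha ih => rw [sum_insert ha, prod_insert ha, chi_add, ih]

lemma chi_sq (a : ZMod p) : (χ a).re ^ 2 + (χ a).im ^ 2 = 1 := by
  have : ‖χ a‖ = 1 := by unfold χ; exact AddChar.norm_apply _ _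
  have h2 := Complex.sq_norm (χ a)
  rw [this, Complex.normSq_apply] at h2
  linarith

lemma chi_sum (b : ZMod p) : ∑ x : ZMod p, χ (x * b) = if b = 0 then (p : ℂ) else 0 := by
  unfold χ
  have := AddChar.sum_mulShift b (ZMod.isPrimitive_stdAddChar p)
  rw [this, ZMod.card]
  split_ifs <;> simp

lemma pr_fourier [Nonempty L] (φ : L → ZMod p) (v : ι → ZMod p) :
    (pr φ v : ℂ) = (1 / (p : ℂ)) * ∑ ξ : ZMod p,
      ∏ j, ((∑ l, χ (ξ * (φ l * v j))) / (Fintype.card L : ℂ)) := by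
  have hp : (p : ℂ) ≠ 0 := by exact_mod_cast (Fact.out : p.Prime).ne_zero
  have hL : (Fintype.card L : ℂ) ≠ 0 := by exact_mod_cast Fintype.card_ne_zero
  have h1 : ((orth φ v).card : ℂ) = (1 / (p : ℂ)) * ∑ ξ : ZMod p, ∑ x : ι → L, χ (ξ * ∑ j, φ (x j) * v j) := by
    rw [Finset.sum_comm]
    simp only [chi_sum]
    rw [← Finset.sum_filter, sum_const, nsmul_eq_mul]
    unfold orth
    field_simp
  have h2 : ∀ ξ : ZMod p, ∑ x : ι → L, χ (ξ * ∑ j, φ (x j) * v j) = ∏ j, ∑ l, χ (ξ * (φ l * v j)) := by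
    intro ξ
    rw [Finset.prod_univ_sum, Fintype.piFinset_univ]
    refine Finset.sum_congr rfl fun x _ => ?_
    rw [Finset.mul_sum]
    exact chi_fsum _ _
  unfold pr
  push_cast
  rw [h1]
  simp only [h2, Finset.prod_div_distrib, prod_const, Finset.card_univ]
  rw [← Finset.sum_div]
  ring

/-- sign labels -/
def sg (p : ℕ) (u : ℤˣ) : ZMod p := ((u : ℤ) : ZMod p)

/-- lazy labels -/
def lz (p : ℕ) (l : Fin 64) : ZMod p := if l = 0 then 2 else if l = 1 then -2 else 0

/-- The energy. -/
noncomputable def En (v : ι → ZMod p) (ξ : ZMod p) : ℝ := ∑ j, (χ (ξ * v j)).im ^ 2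

lemma En_nonneg (v : ι → ZMod p) (ξ : ZMod p) : 0 ≤ En v ξ :=
  Finset.sum_nonneg fun _ _ => sq_nonneg _

lemma En_add (v : ι → ZMod p) (ξ η : ZMod p) : En v (ξ + η) ≤ 2 * (En v ξ + En v η) := by
  unfold En
  rw [← Finset.sum_add_distrib, Finset.mul_sum]
  refine Finset.sum_le_sum fun j _ => ?_
  rw [add_mul, chi_add, Complex.mul_im]
  have h1 := chi_sq (ξ * v j)
  have h2 := chi_sq (η * v j)
  set a := (χ (ξ * v j)).re
  set b := (χ (ξ * v j)).im
  set c := (χ (η * v j)).re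
  set d := (χ (η * v j)).im
  have h3 : (a * d + b * c) ^ 2 ≤ 2 * ((a * d) ^ 2 + (b * c) ^ 2) := by nlinarith [sq_nonneg (a * d - b * c)]
  have h4 : (a * d) ^ 2 ≤ d ^ 2 := by rw [mul_pow]; nlinarith [sq_nonneg b, sq_nonneg d]
  have h5 : (b * c) ^ 2 ≤ b ^ 2 := by rw [mul_pow]; nlinarith [sq_nonneg b, sq_nonneg d]
  linarith

lemma im_sq (a : ZMod p) : (χ a).im ^ 2 = (1 - (χ (2 * a)).re) / 2 := by
  rw [two_mul, chi_add, Complex.mul_re]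
  have := chi_sq a
  nlinarith

lemma En_sum (hp : p ≠ 2) (v : ι → ZMod p) :
    ∑ ξ : ZMod p, En v ξ = (univ.filter (fun j => v j ≠ 0)).card * (p : ℝ) / 2 := by
  unfold En
  rw [Finset.sum_comm]
  have h2 : (2 : ZMod p) ≠ 0 := by
    intro h
    have : ((2 : ℕ) : ZMod p) = 0 := by exact_mod_cast h
    rw [ZMod.natCast_eq_zero_iff] at this
    exact hp ((Nat.prime_dvd_prime_iff_eq Fact.out Nat.prime_two).1 this)
  have : ∀ j, ∑ ξ : ZMod p, (χ (ξ * v j)).im ^ 2 = if v j ≠ 0 then (p : ℝ) / 2 else 0 := by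
    intro j
    split_ifs with h
    · simp only [im_sq]
      have h3 := chi_sum (2 * v j)
      rw [if_neg (mul_ne_zero h2 h)] at h3
      have h4 := congrArg Complex.re h3
      rw [Complex.re_sum, Complex.zero_re] at h4
      rw [← Finset.sum_div, Finset.sum_sub_distrib]
      have h5 : ∀ x : ZMod p, 2 * (x * v j) = x * (2 * v j) := fun x => by ring
      simp only [h5]
      rw [h4]
      simp [ZMod.card]
    · push Not at h
      simp [h, chi_zero]
  simp only [this]
  rw [← Finset.sum_filter, sum_const, nsmul_eq_mul]
  ring

lemma pr_sg_le (v : ι → ZMod p) :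
    pr (sg p) v ≤ (1 / (p : ℝ)) * ∑ ξ : ZMod p, Real.exp (-(En v ξ) / 2) := by
  have hp : 0 < (p : ℝ) := by exact_mod_cast (Fact.out : p.Prime).pos
  have h := pr_fourier (sg p) v
  have hn : pr (sg p) v = ‖(pr (sg p) v : ℂ)‖ := by
    rw [Complex.norm_real, Real.norm_of_nonneg (pr_nonneg _ _)]
  rw [hn, h, norm_mul]
  have : ‖(1 / (p : ℂ))‖ = 1 / (p : ℝ) := by simp
  rw [this]
  gcongr
  refine (norm_sum_le _ _).trans (Finset.sum_le_sum fun ξ _ => ?_)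
  rw [norm_prod]
  have : Real.exp (-(En v ξ) / 2) = ∏ j, Real.exp (-(χ (ξ * v j)).im ^ 2 / 2) := by
    rw [← Real.exp_sum]
    congr 1
    unfold En
    rw [← Finset.sum_neg_distrib, Finset.sum_div]
  rw [this]
  refine Finset.prod_le_prod (fun _ _ => norm_nonneg _) fun j _ => ?_
  have e : (∑ l : ℤˣ, χ (ξ * (sg p l * v j))) / (Fintype.card ℤˣ : ℂ) = ((χ (ξ * v j)).re : ℂ) := by
    have hu : (univ : Finset ℤˣ) = {1, -1} := rfl
    rw [hu, Finset.sum_pair (by decide), Fintype.card_units_int]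
    have h1 : ξ * (sg p (-1) * v j) = -(ξ * v j) := by simp [sg]
    have h2 : ξ * (sg p 1 * v j) = (ξ * v j) := by simp [sg]
    rw [h1, h2, chi_neg, Complex.add_conj]
    push_cast
    ring
  rw [e, Complex.norm_real, Real.norm_eq_abs]
  have hc := chi_sq (ξ * v j)
  set a := (χ (ξ * v j)).re
  set b := (χ (ξ * v j)).im
  refine abs_le_of_sq_le_sq ?_ (Real.exp_pos _).le
  rw [← Real.exp_nat_mul]
  have := Real.add_one_le_exp (((2 : ℕ) : ℝ) * (-b ^ 2 / 2))
  push_cast at this ⊢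
  linarith

lemma pr_lz_ge (v : ι → ZMod p) :
    (1 / (p : ℝ)) * ∑ ξ : ZMod p, Real.exp (-(En v ξ) / 8) ≤ pr (lz p) v := by
  have hp : 0 < (p : ℝ) := by exact_mod_cast (Fact.out : p.Prime).pos
  have h := pr_fourier (lz p) v
  have e : ∀ ξ : ZMod p, ∀ j, (∑ l : Fin 64, χ (ξ * (lz p l * v j))) / (Fintype.card (Fin 64) : ℂ)
      = ((1 - (χ (ξ * v j)).im ^ 2 / 16 : ℝ) : ℂ) := by
    intro ξ j
    have hs : ∑ l : Fin 64, χ (ξ * (lz p l * v j)) = χ (2 * (ξ * v j)) + χ (-(2 * (ξ * v j))) + 62 := by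
      rw [Fin.sum_univ_succ, Fin.sum_univ_succ]
      have h1 : ξ * (lz p 0 * v j) = 2 * (ξ * v j) := by simp [lz]; ring
      have h2 : ξ * (lz p (Fin.succ 0) * v j) = -(2 * (ξ * v j)) := by simp [lz]; ring
      have h3 : ∀ i : Fin 62, ξ * (lz p (Fin.succ (Fin.succ i)) * v j) = 0 := by
        intro i
        have : lz p (Fin.succ (Fin.succ i)) = 0 := by
          unfold lz
          rw [if_neg (Fin.succ_ne_zero _), if_neg]
          intro h
          have := congrArg Fin.val h
          simp at this
        rw [this]; ring
      simp only [h1, h2, h3, chi_zero]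
      simp
      ring
    rw [hs, chi_neg, Complex.add_conj, im_sq]
    simp
    ring
  simp only [e] at h
  have h' : pr (lz p) v = (1 / (p : ℝ)) * ∑ ξ : ZMod p, ∏ j, (1 - (χ (ξ * v j)).im ^ 2 / 16) := by
    apply Complex.ofReal_injective
    rw [h]
    push_cast
    rfl
  rw [h']
  gcongr with ξ
  have : Real.exp (-(En v ξ) / 8) = ∏ j, Real.exp (-(χ (ξ * v j)).im ^ 2 / 8) := by
    rw [← Real.exp_sum]
    congr 1
    unfold En
    rw [← Finset.sum_neg_distrib, Finset.sum_div]
  rw [this]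
  refine Finset.prod_le_prod (fun _ _ => (Real.exp_pos _).le) fun j _ => ?_
  have hc := chi_sq (ξ * v j)
  set a := (χ (ξ * v j)).re
  set b := (χ (ξ * v j)).im
  have hb : b ^ 2 ≤ 1 := by nlinarith [sq_nonneg a]
  have hb0 := sq_nonneg b
  set t := b ^ 2
  -- exp(-t/8) ≤ 1 / (1 + t/8) ≤ 1 - t/16
  have h1 := Real.add_one_le_exp (t / 8)
  have h2 : Real.exp (-t / 8) * Real.exp (t / 8) = 1 := by
    rw [← Real.exp_add]; simp [neg_div]
  have h3 : Real.exp (-t / 8) * (t / 8 + 1) ≤ 1 := by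
    refine le_trans ?_ h2.le
    exact mul_le_mul_of_nonneg_left h1 (Real.exp_pos _).le
  have h4 := Real.exp_pos (-t / 8)
  nlinarith

end C
end RN

end PartPC

section PartPD
open Finset
set_option linter.unusedSectionVars false
set_option linter.style.haveILetI false

namespace RN

section D
open MeasureTheory

/-- truncated exponential weight -/
noncomputable def wt (c : ℝ) (u : ℝ) : ℝ := (Set.Ioi c).indicator (fun u => (1/2) * Real.exp (-(1/2) * u)) u

lemma wt_integrable (c : ℝ) : Integrable (wt c) := by
  unfold wt
  rw [integrable_indicator_iff measurableSet_Ioi]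
  exact (integrableOn_exp_mul_Ioi (by norm_num) c).const_mul _

lemma wt_integral (c : ℝ) : ∫ u, wt c u = Real.exp (-c / 2) := by
  unfold wt
  rw [integral_indicator measurableSet_Ioi, integral_const_mul, integral_exp_mul_Ioi (by norm_num)]
  rw [show -(1/2) * c = -c / 2 by ring]
  ring

variable {p : ℕ} [Fact p.Prime]

open scoped Pointwise in
lemma layer (S : ZMod p → ℝ) (k : ℝ) (h0 : ∀ ξ, 0 ≤ S ξ)
    (hadd : ∀ ξ η, S (ξ + η) ≤ 2 * (S ξ + S η)) (hsum : ∑ ξ, S ξ = k * p / 2) :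
    2 * ∑ ξ, Real.exp (-(S ξ) / 2) ≤ ∑ ξ, Real.exp (-(S ξ) / 8) + 1 + 2 * p * Real.exp (-k / 16) := by
  have hp : p.Prime := Fact.out
  have hp0 : 0 < (p : ℝ) := by exact_mod_cast hp.pos
  have hpt : ∀ u : ℝ, 2 * ∑ ξ, wt (S ξ) u ≤ ∑ ξ, wt (S ξ / 4) u + wt 0 u + 2 * p * wt (k / 8) u := by
    intro u
    set w : ℝ := (1/2) * Real.exp (-(1/2) * u) with hw
    have hw0 : 0 ≤ w := by positivity
    have hwt : ∀ c, wt c u = if c < u then w else 0 := by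
      intro c; unfold wt; simp [Set.indicator_apply, hw]
    simp only [hwt]
    rw [← Finset.sum_filter, ← Finset.sum_filter, sum_const, sum_const, nsmul_eq_mul, nsmul_eq_mul]
    set T := univ.filter (fun ξ => S ξ < u) with hT
    set T4 := univ.filter (fun ξ => S ξ / 4 < u) with hT4
    have hTp : (T.card : ℝ) ≤ p := by
      have := Finset.card_le_univ T
      rw [ZMod.card] at this
      exact_mod_cast this
    have hTe : T.Nonempty → 0 < u := by
      rintro ⟨ξ, hξ⟩
      exact (h0 ξ).trans_lt (mem_filter.1 hξ).2
    rcases T.eq_empty_or_nonempty with hE | hE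
    · rw [hE]
      simp only [card_empty, Nat.cast_zero, zero_mul, mul_zero]
      split_ifs <;> positivity
    · have hu := hTe hE
      rw [if_pos hu]
      by_cases hku : k / 8 < u
      · rw [if_pos hku]
        have : (T.card : ℝ) * w ≤ p * w := by gcongr
        have : 0 ≤ (T4.card : ℝ) * w := by positivity
        linarith
      · rw [if_neg hku]
        have hsub : T + T ⊆ T4 := by
          intro z hz
          obtain ⟨x, hx, y, hy, rfl⟩ := Finset.mem_add.1 hz
          have hx' := (mem_filter.1 hx).2
          have hy' := (mem_filter.1 hy).2
          refine mem_filter.2 ⟨mem_univ _, ?_⟩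
          linarith [hadd x y]
        have hlt : T4.card < p := by
          by_contra hcon
          push Not at hcon
          have huniv : T4 = univ := by
            apply Finset.eq_univ_of_card
            rw [ZMod.card]
            refine le_antisymm ?_ hcon
            have := Finset.card_le_univ T4
            rwa [ZMod.card] at this
          have : ∑ ξ, S ξ < ∑ _ξ : ZMod p, 4 * u := by
            refine Finset.sum_lt_sum_of_nonempty univ_nonempty fun ξ _ => ?_
            have : ξ ∈ T4 := by rw [huniv]; exact mem_univ _
            linarith [(mem_filter.1 this).2]
          rw [hsum, sum_const, nsmul_eq_mul, Finset.card_univ, ZMod.card] at this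
          push Not at hku
          nlinarith
        have hcd := ZMod.cauchy_davenport hp hE hE
        have hle := Finset.card_le_card hsub
        have : 2 * T.card ≤ T4.card + 1 := by
          rcases min_le_iff.1 (hcd.trans hle) with h | h <;> omega
        have : (2 : ℝ) * T.card ≤ T4.card + 1 := by exact_mod_cast this
        nlinarith
  have hi : ∫ u, 2 * ∑ ξ, wt (S ξ) u ≤ ∫ u, (∑ ξ, wt (S ξ / 4) u + wt 0 u + 2 * p * wt (k / 8) u) := by
    refine integral_mono ?_ ?_ hpt
    · exact (integrable_finsetSum _ fun ξ _ => wt_integrable _).const_mul _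
    · exact ((integrable_finsetSum _ fun ξ _ => wt_integrable _).add (wt_integrable _)).add
        ((wt_integrable _).const_mul _)
  rw [integral_const_mul, integral_finsetSum _ fun ξ _ => wt_integrable _, integral_add, integral_add,
    integral_finsetSum _ fun ξ _ => wt_integrable _, integral_const_mul] at hi
  · simp only [wt_integral] at hi
    simp only [neg_zero, zero_div, Real.exp_zero] at hi
    have e1 : ∀ ξ, -(S ξ / 4) / 2 = - S ξ / 8 := fun ξ => by ring
    have e2 : -(k / 8) / 2 = - k / 16 := by ring
    simp only [e1, e2] at hi
    exact hi
  · exact (integrable_finsetSum _ fun ξ _ => wt_integrable _)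
  · exact wt_integrable _
  · exact ((integrable_finsetSum _ fun ξ _ => wt_integrable _).add (wt_integrable _))
  · exact ((wt_integrable _).const_mul _)

variable {ι : Type*} [Fintype ι] [DecidableEq ι]

lemma compare (hp2 : p ≠ 2) (v : ι → ZMod p) :
    2 * pr (sg p) v ≤ pr (lz p) v + 1 / p
      + 2 * Real.exp (-((univ.filter (fun j => v j ≠ 0)).card : ℝ) / 16) := by
  have hp : p.Prime := Fact.out
  have hp0 : 0 < (p : ℝ) := by exact_mod_cast hp.pos
  have h := layer (En v) _ (En_nonneg v) (En_add v) (En_sum hp2 v)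
  have h1 := pr_sg_le v
  have h2 := pr_lz_ge v
  set k : ℝ := ((univ.filter (fun j => v j ≠ 0)).card : ℝ)
  have h3 := mul_le_mul_of_nonneg_left h (show 0 ≤ 1 / (p : ℝ) by positivity)
  have h4 : 1 / (p : ℝ) * (2 * p * Real.exp (-k / 16)) = 2 * Real.exp (-k / 16) := by field_simp
  linarith

end D
end RN

end PartPD

section PartPE
open Finset
set_option linter.unusedSectionVars false
set_option linter.style.haveILetI false

namespace RN

section E
variable {p : ℕ} [Fact p.Prime]
variable {ι : Type*} [Fintype ι] [DecidableEq ι]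

/-- support size -/
def supp (v : ι → ZMod p) : ℕ := (univ.filter (fun j => v j ≠ 0)).card

lemma sparse_count [Nonempty ι] (s : ℕ) :
    (univ.filter (fun v : ι → ZMod p => supp v ≤ s)).card ≤ (Fintype.card ι * p) ^ s := by
  induction s with
  | zero =>
    rw [pow_zero, Finset.card_le_one]
    have : ∀ v : ι → ZMod p, supp v ≤ 0 → v = 0 := by
      intro v hv
      unfold supp at hv
      rw [Nat.le_zero, Finset.card_eq_zero, Finset.filter_eq_empty_iff] at hv
      ext j
      simpa using hv (mem_univ j)
    intro a ha b hb
    rw [this a (mem_filter.1 ha).2, this b (mem_filter.1 hb).2]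
  | succ s ih =>
    have hsub : (univ.filter (fun v : ι → ZMod p => supp v ≤ s + 1)) ⊆
        ((univ.filter (fun v : ι → ZMod p => supp v ≤ s)) ×ˢ (univ : Finset (ι × ZMod p))).image
          (fun q => Function.update q.1 q.2.1 q.2.2) := by
      intro v hv
      have hv := (mem_filter.1 hv).2
      rw [mem_image]
      by_cases h0 : supp v ≤ s
      · obtain ⟨j⟩ := ‹Nonempty ι›
        exact ⟨(v, (j, v j)), by simp [h0], by simp⟩
      · have : (univ.filter (fun j => v j ≠ 0)).Nonempty := by
          rw [← Finset.card_pos]; unfold supp at h0; omega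
        obtain ⟨j, hj⟩ := this
        refine ⟨(Function.update v j 0, (j, v j)), ?_, by simp⟩
        simp only [mem_product, mem_filter, mem_univ, true_and, and_true]
        have : univ.filter (fun i => Function.update v j 0 i ≠ 0) ⊆ (univ.filter (fun j => v j ≠ 0)).erase j := by
          intro i hi
          have hi := (mem_filter.1 hi).2
          rw [mem_erase]
          by_cases hij : i = j
          · subst hij; simp at hi
          · refine ⟨hij, ?_⟩
            rw [Function.update_of_ne hij] at hi
            simpa using hi
        have h2 := Finset.card_le_card this
        rw [Finset.card_erase_of_mem hj] at h2
        unfold supp at hv ⊢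
        omega
    calc _ ≤ _ := Finset.card_le_card hsub
      _ ≤ _ := Finset.card_image_le
      _ ≤ (Fintype.card ι * p) ^ s * (Fintype.card ι * p) := by
          rw [card_product, Finset.card_univ, Fintype.card_prod, ZMod.card]
          exact Nat.mul_le_mul_right _ ih
      _ = _ := by rw [pow_succ]

lemma two_ne (hp2 : p ≠ 2) : (2 : ZMod p) ≠ 0 := by
  intro h
  have : ((2 : ℕ) : ZMod p) = 0 := by exact_mod_cast h
  rw [ZMod.natCast_eq_zero_iff] at this
  exact hp2 ((Nat.prime_dvd_prime_iff_eq Fact.out Nat.prime_two).1 this)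

lemma sg_fiber (hp2 : p ≠ 2) (a : ZMod p) : (univ.filter (fun l => sg p l = a)).card ≤ 1 := by
  rw [Finset.card_le_one]
  intro x hx y hy
  have hx := (mem_filter.1 hx).2
  have hy := (mem_filter.1 hy).2
  have h : sg p x = sg p y := hx.trans hy.symm
  have h1 : (1 : ZMod p) ≠ -1 := by
    intro h
    apply two_ne hp2
    calc (2 : ZMod p) = 1 + 1 := by norm_num
      _ = 1 + -1 := by rw [← h]
      _ = 0 := by ring
  rcases Int.units_eq_one_or x with rfl | rfl <;> rcases Int.units_eq_one_or y with rfl | rfl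
  · rfl
  · simp [sg, h1] at h
  · simp [sg, h1.symm] at h
  · rfl

lemma lz_fiber (hp2 : p ≠ 2) (a : ZMod p) : (univ.filter (fun l => lz p l = a)).card ≤ 62 := by
  have h2 := two_ne hp2
  by_cases ha : a = 0
  · subst ha
    calc _ ≤ ((univ : Finset (Fin 64)) \ {0, 1}).card := by
          refine Finset.card_le_card fun l hl => ?_
          have hl := (mem_filter.1 hl).2
          simp only [mem_sdiff, mem_univ, true_and, mem_insert, mem_singleton]
          rintro (rfl | rfl)
          · simp [lz, h2] at hl
          · simp [lz, h2] at hl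
      _ ≤ 62 := by decide
  · calc _ ≤ ({0, 1} : Finset (Fin 64)).card := by
          refine Finset.card_le_card fun l hl => ?_
          have hl := (mem_filter.1 hl).2
          simp only [mem_insert, mem_singleton]
          by_contra hcon
          push Not at hcon
          unfold lz at hl
          rw [if_neg hcon.1, if_neg hcon.2] at hl
          exact ha hl.symm
      _ ≤ 62 := by decide

lemma pr_sg_half (hp2 : p ≠ 2) (v : ι → ZMod p) (hv : v ≠ 0) : pr (sg p) v ≤ 1 / 2 := by
  classical
  have h := odlyzko (sg p) 1 (sg_fiber hp2) (Submodule.span (ZMod p) {v})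
  rw [finrank_span_singleton hv] at h
  have e : (univ.filter (fun x : ι → ℤˣ => Submodule.span (ZMod p) {v} ≤ LinearMap.ker (fnl (sg p) x)))
      = orth (sg p) v := by
    unfold orth
    ext x
    simp [fnl_apply, Submodule.span_singleton_le_iff_mem]
  unfold pr
  rw [div_le_iff₀ (by positivity)]
  have h' : (((orth (sg p) v).card * Fintype.card ℤˣ ^ 1 : ℕ) : ℝ) ≤ ((1 ^ 1 * Fintype.card ℤˣ ^ Fintype.card ι : ℕ) : ℝ) := by
    rw [← e]
    have h' := (Nat.cast_le (α := ℝ)).2 h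
    convert h'
  push_cast [Fintype.card_units_int] at h' ⊢
  linarith

/-- Nonzero vectors with large concentration probability. -/
noncomputable def Str (ε : ℝ) : Finset (ι → ZMod p) :=
  open Classical in univ.filter (fun v => v ≠ 0 ∧ ε < pr (sg p) v)

lemma struct_sum [Nonempty ι] (hp2 : p ≠ 2) (ε : ℝ) (s m : ℕ) (h1 : 1 / (p : ℝ) ≤ ε / 4)
    (h2 : Real.exp (-(s : ℝ) / 16) ≤ ε / 8) :
    ∑ v ∈ Str (p := p) (ι := ι) ε, pr (sg p) v ^ m ≤
      ((Fintype.card ι : ℝ) * p) ^ s * (1 / 2) ^ m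
      + (2 / 3) ^ m * ((1 / (p : ℝ) + (31 / 32) ^ s) ^ m * p ^ (Fintype.card ι) + p ^ s) := by
  classical
  rw [← Finset.sum_filter_add_sum_filter_not _ (fun v => supp v ≤ s)]
  refine add_le_add ?_ ?_
  · calc _ ≤ ∑ v ∈ (Str (p := p) (ι := ι) ε).filter (fun v => supp v ≤ s), (1 / 2 : ℝ) ^ m := by
          refine Finset.sum_le_sum fun v hv => ?_
          have hv0 : v ≠ 0 := (mem_filter.1 (mem_filter.1 hv).1).2.1
          exact pow_le_pow_left₀ (pr_nonneg _ _) (pr_sg_half hp2 v hv0) m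
      _ = ((Str (p := p) (ι := ι) ε).filter (fun v => supp v ≤ s)).card * (1 / 2 : ℝ) ^ m := by
          rw [sum_const, nsmul_eq_mul]
      _ ≤ _ := by
          gcongr
          have : ((Str (p := p) (ι := ι) ε).filter (fun v => supp v ≤ s)).card ≤ (Fintype.card ι * p) ^ s :=
            (Finset.card_le_card (Finset.filter_subset_filter _ (Finset.subset_univ _))).trans (sparse_count s)
          exact_mod_cast this
  · calc _ ≤ ∑ v ∈ (Str (p := p) (ι := ι) ε).filter (fun v => ¬ supp v ≤ s), (2 / 3 : ℝ) ^ m * pr (lz p) v ^ m := by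
          refine Finset.sum_le_sum fun v hv => ?_
          have hv1 : ε < pr (sg p) v := (mem_filter.1 (mem_filter.1 hv).1).2.2
          have hv2 := (mem_filter.1 hv).2
          push Not at hv2
          rw [← mul_pow]
          refine pow_le_pow_left₀ (pr_nonneg _ _) ?_ m
          have hc := compare hp2 v
          have : Real.exp (-((univ.filter (fun j => v j ≠ 0)).card : ℝ) / 16) ≤ Real.exp (-(s : ℝ) / 16) := by
            apply Real.exp_le_exp.2
            have : (s : ℝ) ≤ ((univ.filter (fun j => v j ≠ 0)).card : ℝ) := by
              exact_mod_cast hv2.le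
            linarith
          linarith
      _ = (2 / 3 : ℝ) ^ m * ∑ v ∈ (Str (p := p) (ι := ι) ε).filter (fun v => ¬ supp v ≤ s), pr (lz p) v ^ m := by
          rw [Finset.mul_sum]
      _ ≤ (2 / 3 : ℝ) ^ m * ∑ v ∈ univ.filter (fun v => v ∈ (⊤ : Submodule (ZMod p) (ι → ZMod p))), pr (lz p) v ^ m := by
          refine mul_le_mul_of_nonneg_left ?_ (by positivity)
          refine Finset.sum_le_sum_of_subset_of_nonneg ?_ ?_
          · intro v _; simp
          · intro v _ _; exact pow_nonneg (pr_nonneg (lz p) v) m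
      _ ≤ _ := by
          gcongr
          have := moment_bound (ι := ι) (lz p) 62 (lz_fiber hp2) (by simp) s m ⊤
          rw [ZMod.card, Fintype.card_fin] at this
          have e : (Nat.card (⊤ : Submodule (ZMod p) (ι → ZMod p)) : ℝ) = (p : ℝ) ^ Fintype.card ι := by
            rw [Nat.card_congr (Submodule.topEquiv (R := ZMod p) (M := ι → ZMod p)).toEquiv,
              Nat.card_eq_fintype_card, Fintype.card_fun, ZMod.card]
            push_cast; rfl
          rw [e] at this
          rw [show (31 / 32 : ℝ) = ((62 : ℕ) : ℝ) / ((64 : ℕ) : ℝ) by norm_num]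
          refine le_trans (le_of_eq ?_) this
          refine Finset.sum_congr ?_ fun _ _ => rfl
          ext v; simp

/-- A sign matrix over `ZMod p`. -/
def mz (p : ℕ) (M : ι → ι → ℤˣ) : Matrix ι ι (ZMod p) := Matrix.of fun i j => sg p (M i j)

open Classical in
lemma sing_count (ε : ℝ) :
    ((univ.filter (fun M : ι → ι → ℤˣ => (mz p M).det = 0)).card : ℝ) ≤
      Fintype.card ι * ((2 : ℝ) ^ (Fintype.card ι)) ^ (Fintype.card ι) *
      (∑ v ∈ Str (p := p) (ι := ι) ε, pr (sg p) v ^ (Fintype.card ι - 1) + max ε 0) := by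
  set n := Fintype.card ι with hn
  -- the zeroed-row matrix
  let Z (j : ι) (N : {i // i ≠ j} → ι → ℤˣ) : Matrix ι ι (ZMod p) :=
    Matrix.of fun i k => if h : i ≠ j then sg p (N ⟨i, h⟩ k) else 0
  have hZ : ∀ j N, ∃ v : ι → ZMod p, v ≠ 0 ∧ (Z j N).mulVec v = 0 := by
    intro j N
    rw [Matrix.exists_mulVec_eq_zero_iff]
    apply Matrix.det_eq_zero_of_row_eq_zero j
    intro k
    simp [Z]
  choose vv hv0 hv using hZ
  let A (j : ι) : Finset (ι → ι → ℤˣ) := (Str (p := p) (ι := ι) ε).biUnion fun v =>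
    Fintype.piFinset (fun i => if i = j then univ else orth (sg p) v)
  let B (j : ι) : Finset (ι → ι → ℤˣ) := univ.filter (fun M =>
    vv j (fun i => M i) ∉ Str (p := p) (ι := ι) ε ∧ M j ∈ orth (sg p) (vv j (fun i => M i)))
  have hsub : (univ.filter (fun M : ι → ι → ℤˣ => (mz p M).det = 0)) ⊆ univ.biUnion (fun j => A j ∪ B j) := by
    intro M hM
    have hM := (mem_filter.1 hM).2
    obtain ⟨c, hc0, hc⟩ := Matrix.exists_vecMul_eq_zero_iff.2 hM
    obtain ⟨j, hj⟩ := Function.ne_iff.1 hc0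
    rw [mem_biUnion]
    refine ⟨j, mem_univ _, ?_⟩
    set v := vv j (fun i => M i) with hvd
    have hort : ∀ i, i ≠ j → ∑ k, sg p (M i k) * v k = 0 := by
      intro i hi
      have := congrFun (hv j (fun i => M i)) i
      simpa [Z, Matrix.mulVec, dotProduct, hi] using this
    rw [mem_union]
    by_cases hS : v ∈ Str (p := p) (ι := ι) ε
    · left
      simp only [A, mem_biUnion]
      refine ⟨v, hS, ?_⟩
      rw [Fintype.mem_piFinset]
      intro i
      by_cases hi : i = j
      · simp [hi]
      · rw [if_neg hi]
        simp only [orth, mem_filter, mem_univ, true_and]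
        exact hort i hi
    · right
      simp only [B, mem_filter, mem_univ, true_and]
      refine ⟨hS, ?_⟩
      simp only [orth, mem_filter, mem_univ, true_and]
      have h1 : ∑ i, c i * ∑ k, sg p (M i k) * v k = 0 := by
        have h2 : dotProduct (Matrix.vecMul c (mz p M)) v = 0 := by rw [hc]; simp
        rw [← Matrix.dotProduct_mulVec] at h2
        simpa [dotProduct, Matrix.mulVec, mz] using h2
      rw [Finset.sum_eq_single j (fun i _ hi => by rw [hort i hi, mul_zero]) (by simp)] at h1
      rcases mul_eq_zero.1 h1 with h | h
      · exact absurd h hj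
      · exact h
  have h2n : (0 : ℝ) < 2 ^ n := by positivity
  have horth : ∀ v : ι → ZMod p, ((orth (sg p) v).card : ℝ) = pr (sg p) v * 2 ^ n := by
    intro v
    unfold pr
    rw [Fintype.card_units_int]
    push_cast
    rw [← hn]
    field_simp
  have hA : ∀ j, ((A j).card : ℝ) ≤ ((2 : ℝ) ^ n) ^ n * ∑ v ∈ Str (p := p) (ι := ι) ε, pr (sg p) v ^ (n - 1) := by
    intro j
    have hn1 : n = (n - 1) + 1 := by
      have : 0 < n := Fintype.card_pos_iff.2 ⟨j⟩
      omega
    calc ((A j).card : ℝ) ≤ ((∑ v ∈ Str (p := p) (ι := ι) ε, (Fintype.piFinset (fun i => if i = j then univ else orth (sg p) v)).card : ℕ) : ℝ) := by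
          exact_mod_cast Finset.card_biUnion_le
      _ = _ := by
          push_cast
          rw [Finset.mul_sum]
          refine Finset.sum_congr rfl fun v _ => ?_
          rw [Fintype.card_piFinset, ← Finset.mul_prod_erase univ _ (mem_univ j), if_pos rfl]
          have : ∏ x ∈ univ.erase j, (if x = j then (univ : Finset (ι → ℤˣ)) else orth (sg p) v).card
              = (orth (sg p) v).card ^ (n - 1) := by
            rw [Finset.prod_congr rfl (g := fun _ => (orth (sg p) v).card), prod_const, Finset.card_erase_of_mem (mem_univ j),
              Finset.card_univ]
            intro i hi
            rw [if_neg (ne_of_mem_erase hi)]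
          rw [this, Finset.card_univ, Fintype.card_fun, Fintype.card_units_int]
          push_cast
          rw [horth, ← hn, mul_pow]
          have e : ((2 : ℝ) ^ n) ^ n = 2 ^ n * (2 ^ n) ^ (n - 1) := by
            conv_lhs => rw [hn1]
            rw [pow_succ]
            rw [← hn1]; ring
          rw [e]; ring
  have hB : ∀ j, ((B j).card : ℝ) ≤ ((2 : ℝ) ^ n) ^ n * max ε 0 := by
    intro j
    have hn1 : n = (n - 1) + 1 := by
      have : 0 < n := Fintype.card_pos_iff.2 ⟨j⟩
      omega
    let r : (ι → ι → ℤˣ) → ({i // i ≠ j} → ι → ℤˣ) := fun M i => M i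
    have hfib : ∀ N, (((B j).filter (fun M => r M = N)).card : ℝ) ≤ 2 ^ n * max ε 0 := by
      intro N
      by_cases hS : vv j N ∈ Str (p := p) (ι := ι) ε
      · have : (B j).filter (fun M => r M = N) = ∅ := by
          rw [Finset.filter_eq_empty_iff]
          intro M hM hr
          have := (mem_filter.1 hM).2.1
          apply this
          have h : (fun i : {i // i ≠ j} => M i) = N := hr
          rw [h]; exact hS
        rw [this]
        simp
      · have h1 : ((B j).filter (fun M => r M = N)).card ≤ (orth (sg p) (vv j N)).card := by
          refine Finset.card_le_card_of_injOn (fun M => M j) ?_ ?_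
          · intro M hM
            have hM' := mem_filter.1 hM
            have h2 := (mem_filter.1 hM'.1).2.2
            have h : (fun i : {i // i ≠ j} => M i) = N := hM'.2
            rw [h] at h2
            exact h2
          · intro M hM M' hM' hj
            have h : (fun i : {i // i ≠ j} => M i) = (fun i : {i // i ≠ j} => M' i) :=
              (mem_filter.1 hM).2.trans (mem_filter.1 hM').2.symm
            funext i
            by_cases hi : i = j
            · rw [hi]; exact hj
            · exact congrFun h ⟨i, hi⟩
        have h2 : pr (sg p) (vv j N) ≤ max ε 0 := by
          by_contra hcon
          push Not at hcon
          apply hS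
          simp only [Str, mem_filter, mem_univ, true_and]
          exact ⟨hv0 j N, (le_max_left _ _).trans_lt hcon⟩
        calc (((B j).filter (fun M => r M = N)).card : ℝ) ≤ (orth (sg p) (vv j N)).card := by exact_mod_cast h1
          _ = pr (sg p) (vv j N) * 2 ^ n := horth _
          _ ≤ max ε 0 * 2 ^ n := by gcongr
          _ = _ := by ring
    have hcard : (Finset.univ : Finset ({i // i ≠ j} → ι → ℤˣ)).card = (2 ^ n) ^ (n - 1) := by
      rw [Finset.card_univ, Fintype.card_fun, Fintype.card_fun, Fintype.card_units_int]
      congr 1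
      rw [Fintype.card_subtype_compl]
      simp [hn]
    rw [Finset.card_eq_sum_card_fiberwise (f := r) (t := univ) (fun _ _ => mem_coe.2 (mem_univ _))]
    push_cast
    calc _ ≤ ∑ _N : ({i // i ≠ j} → ι → ℤˣ), (2 : ℝ) ^ n * max ε 0 := Finset.sum_le_sum fun N _ => hfib N
      _ = _ := by
          rw [sum_const, nsmul_eq_mul, hcard]
          push_cast
          have e : ((2 : ℝ) ^ n) ^ n = 2 ^ n * (2 ^ n) ^ (n - 1) := by
            conv_lhs => rw [hn1]
            rw [pow_succ]
            rw [← hn1]; ring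
          rw [e]; ring
  calc _ ≤ ((∑ j : ι, ((A j).card + (B j).card) : ℕ) : ℝ) := by
        have h := (Finset.card_le_card hsub).trans Finset.card_biUnion_le
        have h' := h.trans (Finset.sum_le_sum fun j _ => Finset.card_union_le (A j) (B j))
        exact_mod_cast h'
    _ = ∑ j : ι, (((A j).card : ℝ) + (B j).card) := by push_cast; rfl
    _ ≤ ∑ _j : ι, (((2 : ℝ) ^ n) ^ n * ∑ v ∈ Str (p := p) (ι := ι) ε, pr (sg p) v ^ (n - 1) + ((2 : ℝ) ^ n) ^ n * max ε 0) :=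
        Finset.sum_le_sum fun j _ => add_le_add (hA j) (hB j)
    _ = _ := by
        rw [sum_const, nsmul_eq_mul, Finset.card_univ, ← hn]; ring

end E
end RN

end PartPE

section PartPG
open Finset
set_option linter.unusedSectionVars false
set_option linter.style.haveILetI false

namespace RN
section G
open Filter Topology

/-- integer sign matrix -/
def zm {n : ℕ} (M : Fin n → Fin n → ℤˣ) : Matrix (Fin n) (Fin n) ℤ := Matrix.of fun i j => ((M i j : ℤˣ) : ℤ)

/-- singular sign matrices -/
def Sing (n : ℕ) : Finset (Fin n → Fin n → ℤˣ) := univ.filter (fun M => (zm M).det = 0)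

set_option maxHeartbeats 800000 in
lemma sing_le (n : ℕ) (hn : 1 ≤ n) (s : ℕ) (hs1 : 1 ≤ s) (hs : s ^ 2 ≤ n) (hs' : n ≤ 4 * s ^ 2)
    (c1 : 2048 * ((s : ℝ) ^ 8 * (31 / 32) ^ s) ≤ 1)
    (c2 : 512 * ((s : ℝ) ^ 6 * (Real.exp (-(1 / 16))) ^ s) ≤ 1)
    (c3 : 2048 * ((s : ℝ) ^ 8 * (2 / 3) ^ s) ≤ 1 / 2) :
    (n : ℝ) * ((Sing n).card / ((2 : ℝ) ^ n) ^ n) ≤ 120 * ((s : ℝ) ^ 4 * (1 / 2) ^ s) + 1 / n := by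
  have hn0 : (0 : ℝ) < n := by exact_mod_cast hn
  have hn1 : (1 : ℝ) ≤ n := by exact_mod_cast hn
  have hsr : (n : ℝ) ≤ 4 * (s : ℝ) ^ 2 := by exact_mod_cast hs'
  have hs1r : (1 : ℝ) ≤ s := by exact_mod_cast hs1
  obtain ⟨p, hp, hp1, hp2⟩ := Nat.exists_prime_lt_and_le_two_mul (4 * n ^ 3) (by positivity)
  haveI : Fact p.Prime := ⟨hp⟩
  haveI : Nonempty (Fin n) := ⟨⟨0, hn⟩⟩
  have hn3 : 1 ≤ n ^ 3 := Nat.one_le_pow _ _ hn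
  have hp2' : p ≠ 2 := by omega
  have hp1r : 4 * (n : ℝ) ^ 3 < p := by exact_mod_cast hp1
  have hp2r : (p : ℝ) ≤ 8 * (n : ℝ) ^ 3 := by
    have : p ≤ 8 * n ^ 3 := by omega
    exact_mod_cast this
  have hp0 : (0 : ℝ) < p := by exact_mod_cast hp.pos
  set ε : ℝ := 1 / (n : ℝ) ^ 3 with hε
  have hε0 : 0 < ε := by positivity
  have hn3s : 8 * (n : ℝ) ^ 3 ≤ 512 * (s : ℝ) ^ 6 := by
    have := pow_le_pow_left₀ hn0.le hsr 3
    calc 8 * (n : ℝ) ^ 3 ≤ 8 * (4 * (s : ℝ) ^ 2) ^ 3 := by linarith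
      _ = _ := by ring
  have hn4s : 8 * (n : ℝ) ^ 4 ≤ 2048 * (s : ℝ) ^ 8 := by
    have := pow_le_pow_left₀ hn0.le hsr 4
    calc 8 * (n : ℝ) ^ 4 ≤ 8 * (4 * (s : ℝ) ^ 2) ^ 4 := by linarith
      _ = _ := by ring
  have h1 : 1 / (p : ℝ) ≤ ε / 4 := by
    rw [hε, div_div]
    apply one_div_le_one_div_of_le (by positivity)
    linarith
  have h2 : Real.exp (-(s : ℝ) / 16) ≤ ε / 8 := by
    have e : Real.exp (-(s : ℝ) / 16) = Real.exp (-(1 / 16)) ^ s := by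
      rw [← Real.exp_nat_mul]; congr 1; ring
    rw [e, hε, div_div, le_div_iff₀ (by positivity)]
    have : 0 ≤ Real.exp (-(1 / 16)) ^ s := by positivity
    nlinarith
  have hst := struct_sum (p := p) (ι := Fin n) hp2' ε s (n - 1) h1 h2
  have hsc := sing_count (p := p) (ι := Fin n) ε
  rw [Fintype.card_fin] at hst hsc
  rw [max_eq_left hε0.le] at hsc
  set Q : ℝ := (8 * (n : ℝ) ^ 4) ^ s with hQ
  have hQ0 : 0 ≤ Q := by positivity
  have hbase : 8 * (n : ℝ) ^ 4 ≤ Q := by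
    have : (1 : ℝ) ≤ 8 * (n : ℝ) ^ 4 := by
      have := one_le_pow₀ hn1 (n := 4); linarith
    exact le_self_pow₀ this (by omega)
  have hT : ∑ v ∈ Str (p := p) (ι := Fin n) ε, pr (sg p) v ^ (n - 1) ≤ 5 * Q * (2 / 3) ^ (n - 1) := by
    refine hst.trans ?_
    have a1 : ((n : ℝ) * p) ^ s ≤ Q := by
      refine pow_le_pow_left₀ (by positivity) ?_ s
      nlinarith
    have a2 : (1 / 2 : ℝ) ^ (n - 1) ≤ (2 / 3) ^ (n - 1) := pow_le_pow_left₀ (by norm_num) (by norm_num) _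
    have a3 : (p : ℝ) ^ s ≤ Q := by
      refine pow_le_pow_left₀ (by positivity) ?_ s
      nlinarith [pow_pos hn0 3]
    have a4 : (1 / (p : ℝ) + (31 / 32) ^ s) ^ (n - 1) * p ^ n ≤ 3 * Q := by
      have b1 : (p : ℝ) * (31 / 32) ^ s ≤ 1 / n := by
        rw [le_div_iff₀ hn0]
        have : (0 : ℝ) ≤ (31 / 32) ^ s := by positivity
        have hpn : (p : ℝ) * n ≤ 2048 * (s : ℝ) ^ 8 := by nlinarith
        calc (p : ℝ) * (31 / 32) ^ s * n = (p * n) * (31 / 32) ^ s := by ring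
          _ ≤ (2048 * (s : ℝ) ^ 8) * (31 / 32) ^ s := mul_le_mul_of_nonneg_right hpn this
          _ ≤ 1 := by linarith
      have b2 : (1 / (p : ℝ) + (31 / 32) ^ s) ^ (n - 1) * p ^ n = p * (1 + p * (31 / 32) ^ s) ^ (n - 1) := by
        obtain ⟨m, rfl⟩ : ∃ m, n = m + 1 := ⟨n - 1, by omega⟩
        rw [Nat.add_sub_cancel, pow_succ (p : ℝ), ← mul_assoc, ← mul_pow]
        have : (1 / (p : ℝ) + (31 / 32) ^ s) * p = 1 + p * (31 / 32) ^ s := by field_simp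
        rw [this]; ring
      have b3 : (1 + (p : ℝ) * (31 / 32) ^ s) ^ (n - 1) ≤ 3 := by
        calc (1 + (p : ℝ) * (31 / 32) ^ s) ^ (n - 1) ≤ (Real.exp (1 / n)) ^ (n - 1) := by
              refine pow_le_pow_left₀ (by positivity) ?_ _
              have := Real.add_one_le_exp (1 / (n : ℝ))
              linarith
          _ ≤ (Real.exp (1 / n)) ^ n := by
              refine pow_le_pow_right₀ (Real.one_le_exp (by positivity)) (by omega)
          _ = Real.exp 1 := by rw [← Real.exp_nat_mul]; congr 1; field_simp
          _ ≤ 3 := by linarith [Real.exp_one_lt_d9]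
      rw [b2]
      calc (p : ℝ) * (1 + p * (31 / 32) ^ s) ^ (n - 1) ≤ p * 3 := by gcongr
        _ ≤ 3 * Q := by nlinarith [pow_pos hn0 3]
    calc _ ≤ Q * (2 / 3) ^ (n - 1) + (2 / 3) ^ (n - 1) * (3 * Q + Q) := by gcongr
      _ = _ := by ring
  have hmap : ((Sing n).card : ℝ) ≤ n * ((2 : ℝ) ^ n) ^ n *
      (∑ v ∈ Str (p := p) (ι := Fin n) ε, pr (sg p) v ^ (n - 1) + ε) := by
    refine le_trans (Nat.cast_le.2 ?_) hsc
    refine Finset.card_le_card fun M hM => ?_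
    have hM := (mem_filter.1 hM).2
    refine mem_filter.2 ⟨mem_univ _, ?_⟩
    have e : mz p M = (zm M).map (Int.castRingHom (ZMod p)) := by
      ext i j; simp [mz, zm, sg]
    rw [e]
    have := (Int.castRingHom (ZMod p)).map_det (zm M)
    rw [hM, map_zero] at this
    exact this.symm
  have hP : ((Sing n).card : ℝ) / ((2 : ℝ) ^ n) ^ n ≤ n * (5 * Q * (2 / 3) ^ (n - 1) + ε) := by
    rw [div_le_iff₀ (by positivity)]
    calc ((Sing n).card : ℝ) ≤ _ := hmap
      _ ≤ n * ((2 : ℝ) ^ n) ^ n * (5 * Q * (2 / 3) ^ (n - 1) + ε) :=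
        mul_le_mul_of_nonneg_left (by linarith) (by positivity)
      _ = _ := by ring
  have hfin : (n : ℝ) ^ 2 * (5 * Q * (2 / 3) ^ (n - 1)) ≤ 120 * ((s : ℝ) ^ 4 * (1 / 2) ^ s) := by
    have d1 : (2 / 3 : ℝ) ^ (n - 1) ≤ (3 / 2) * (2 / 3) ^ (s ^ 2) := by
      have : (2 / 3 : ℝ) ^ n ≤ (2 / 3) ^ (s ^ 2) := pow_le_pow_of_le_one (by norm_num) (by norm_num) hs
      have e : (2 / 3 : ℝ) ^ n = (2 / 3) ^ (n - 1) * (2 / 3) := by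
        rw [← pow_succ]; congr 1; omega
      linarith
    have d2 : Q * (2 / 3) ^ (s ^ 2) ≤ (1 / 2) ^ s := by
      rw [hQ, pow_two, pow_mul, ← mul_pow]
      refine pow_le_pow_left₀ (by positivity) ?_ s
      have : (0 : ℝ) ≤ (2 / 3) ^ s := by positivity
      nlinarith
    have d3 : (n : ℝ) ^ 2 ≤ 16 * (s : ℝ) ^ 4 := by
      have := pow_le_pow_left₀ hn0.le hsr 2
      calc _ ≤ _ := this
        _ = _ := by ring
    calc (n : ℝ) ^ 2 * (5 * Q * (2 / 3) ^ (n - 1)) ≤ (16 * (s : ℝ) ^ 4) * (5 * Q * ((3 / 2) * (2 / 3) ^ (s ^ 2))) :=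
          mul_le_mul d3 (mul_le_mul_of_nonneg_left d1 (by positivity)) (by positivity) (by positivity)
      _ = 120 * ((s : ℝ) ^ 4 * (Q * (2 / 3) ^ (s ^ 2))) := by ring
      _ ≤ _ := by
          refine mul_le_mul_of_nonneg_left ?_ (by norm_num)
          exact mul_le_mul_of_nonneg_left d2 (by positivity)
  calc (n : ℝ) * ((Sing n).card / ((2 : ℝ) ^ n) ^ n) ≤ n * (n * (5 * Q * (2 / 3) ^ (n - 1) + ε)) :=
        mul_le_mul_of_nonneg_left hP hn0.le
    _ = (n : ℝ) ^ 2 * (5 * Q * (2 / 3) ^ (n - 1)) + n ^ 2 * ε := by ring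
    _ ≤ _ := by
        have : (n : ℝ) ^ 2 * ε = 1 / n := by rw [hε]; field_simp
        rw [this]; linarith

lemma sing_tendsto : Tendsto (fun n : ℕ => (n : ℝ) * ((Sing n).card / ((2 : ℝ) ^ n) ^ n)) atTop (𝓝 0) := by
  have hsq : Tendsto Nat.sqrt atTop atTop := by
    refine tendsto_atTop.2 fun b => ?_
    filter_upwards [eventually_ge_atTop (b * b)] with n hn
    exact Nat.le_sqrt.2 hn
  have t (k : ℕ) (r : ℝ) (h0 : 0 ≤ r) (h1 : r < 1) (C : ℝ) :
      Tendsto (fun n : ℕ => C * (((Nat.sqrt n : ℕ) : ℝ) ^ k * r ^ (Nat.sqrt n))) atTop (𝓝 0) := by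
    have := (tendsto_pow_const_mul_const_pow_of_abs_lt_one k (r := r) (by rw [abs_of_nonneg h0]; exact h1)).comp hsq
    have := this.const_mul C
    rw [mul_zero] at this
    exact this
  have hup : Tendsto (fun n : ℕ => 120 * (((Nat.sqrt n : ℕ) : ℝ) ^ 4 * (1 / 2) ^ (Nat.sqrt n)) + 1 / (n : ℝ)) atTop (𝓝 0) := by
    have := (t 4 (1 / 2) (by norm_num) (by norm_num) 120).add tendsto_one_div_atTop_nhds_zero_nat
    rw [add_zero] at this
    exact this
  refine squeeze_zero' (Eventually.of_forall fun n => by positivity) ?_ hup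
  have e1 := (t 8 (31 / 32) (by norm_num) (by norm_num) 2048).eventually_le_const (show (0 : ℝ) < 1 by norm_num)
  have e2 := (t 6 (Real.exp (-(1 / 16))) (Real.exp_pos _).le (by rw [Real.exp_lt_one_iff]; norm_num) 512).eventually_le_const (show (0 : ℝ) < 1 by norm_num)
  have e3 := (t 8 (2 / 3) (by norm_num) (by norm_num) 2048).eventually_le_const (show (0 : ℝ) < 1 / 2 by norm_num)
  filter_upwards [e1, e2, e3, eventually_ge_atTop 1] with n c1 c2 c3 hn
  have hs1 : 1 ≤ Nat.sqrt n := Nat.le_sqrt.2 (by omega)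
  refine sing_le n hn (Nat.sqrt n) hs1 ?_ ?_ c1 c2 c3
  · rw [pow_two]; exact Nat.sqrt_le n
  · have := Nat.lt_succ_sqrt n
    rw [Nat.succ_eq_add_one] at this
    nlinarith

end G
end RN

end PartPG

open Finset

open Finset
set_option linter.unusedSectionVars false
set_option linter.style.haveILetI false

namespace RN
section H
open Filter Topology

/-- real sign matrix -/
def rm {n : ℕ} (M : Fin n → Fin n → ℤˣ) : Matrix (Fin n) (Fin n) ℝ :=
  Matrix.of fun i j => (((M i j : ℤˣ) : ℤ) : ℝ)

lemma rm_sign {n : ℕ} (M : Fin n → Fin n → ℤˣ) : IsSignMatrix (rm M) := by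
  intro i j
  rcases Int.units_eq_one_or (M i j) with h | h <;> simp [rm, h]

lemma usq (u : ℤˣ) : (((u : ℤˣ) : ℤ) : ℝ) * ((u : ℤˣ) : ℤ) = 1 := by
  rcases Int.units_eq_one_or u with h | h <;> simp [h]

lemma rm_inj {n : ℕ} : Function.Injective (rm (n := n)) := by
  intro M M' h
  funext i j
  have := congrFun (congrFun h i) j
  simp only [rm, Matrix.of_apply] at this
  exact Units.ext (by exact_mod_cast this)

lemma rm_surj {n : ℕ} (C : Matrix (Fin n) (Fin n) ℝ) (hC : IsSignMatrix C) : ∃ M, rm M = C := by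
  classical
  refine ⟨fun i j => if C i j = 1 then 1 else -1, ?_⟩
  ext i j
  simp only [rm, Matrix.of_apply]
  split_ifs with h
  · simp [h]
  · simp [(hC i j).resolve_left h]

lemma rm_det {n : ℕ} (M : Fin n → Fin n → ℤˣ) : IsUnit (rm M) ↔ (zm M).det ≠ 0 := by
  have e : rm M = (zm M).map (Int.castRingHom ℝ) := by
    ext i j; simp [rm, zm]
  have h := (Int.castRingHom ℝ).map_det (zm M)
  rw [Matrix.isUnit_iff_isUnit_det, isUnit_iff_ne_zero, e]
  have h' : ((zm M).map (Int.castRingHom ℝ)).det = (((zm M).det : ℤ) : ℝ) := h.symm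
  rw [h']
  exact_mod_cast Iff.rfl

open Classical in
lemma card_rm {n : ℕ} (Q : Matrix (Fin n) (Fin n) ℝ → Prop) :
    Nat.card {C : Matrix (Fin n) (Fin n) ℝ // IsSignMatrix C ∧ Q C}
      = (univ.filter (fun M : Fin n → Fin n → ℤˣ => Q (rm M))).card := by
  rw [← Fintype.card_subtype, ← Nat.card_eq_fintype_card]
  symm
  refine Nat.card_congr (Equiv.ofBijective (fun M => ⟨rm M.1, rm_sign _, M.2⟩) ⟨?_, ?_⟩)
  · intro a b h
    exact Subtype.ext (rm_inj (congrArg Subtype.val h))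
  · rintro ⟨C, hC, hQ⟩
    obtain ⟨M, rfl⟩ := rm_surj C hC
    exact ⟨⟨M, hQ⟩, rfl⟩

/-- solution vector -/
noncomputable def sol {n : ℕ} (M : Fin n → Fin n → ℤˣ) : Fin n → ℝ := (rm M)⁻¹ *ᵥ (1 : Fin n → ℝ)

lemma sol_spec {n : ℕ} {M : Fin n → Fin n → ℤˣ} (h : IsUnit (rm M)) : rm M *ᵥ sol M = 1 := by
  unfold sol
  rw [Matrix.mulVec_mulVec, Matrix.mul_nonsing_inv _ ((Matrix.isUnit_iff_isUnit_det _).1 h), Matrix.one_mulVec]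

lemma sol_unique {n : ℕ} {M : Fin n → Fin n → ℤˣ} (h : IsUnit (rm M)) (x : Fin n → ℝ) (hx : rm M *ᵥ x = 1) :
    x = sol M := by
  unfold sol
  rw [← hx, Matrix.mulVec_mulVec, Matrix.nonsing_inv_mul _ ((Matrix.isUnit_iff_isUnit_det _).1 h), Matrix.one_mulVec]

/-- column scaling -/
def cs {n : ℕ} (d : Fin n → ℤˣ) (M : Fin n → Fin n → ℤˣ) : Fin n → Fin n → ℤˣ := fun i j => M i j * d j

lemma cs_cs {n : ℕ} (d : Fin n → ℤˣ) (M : Fin n → Fin n → ℤˣ) : cs d (cs d M) = M := by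
  funext i j
  simp [cs, mul_assoc]

lemma cs_unit {n : ℕ} (d : Fin n → ℤˣ) {M : Fin n → Fin n → ℤˣ} (h : IsUnit (rm M)) : IsUnit (rm (cs d M)) := by
  have e : rm (cs d M) = rm M * Matrix.diagonal (fun j => (((d j : ℤˣ) : ℤ) : ℝ)) := by
    ext i j
    simp [rm, cs, Matrix.mul_diagonal]
  rw [e]
  refine h.mul ?_
  rw [Matrix.isUnit_iff_isUnit_det, Matrix.det_diagonal, isUnit_iff_ne_zero, Finset.prod_ne_zero_iff]
  intro j _ h0
  have := usq (d j)
  rw [h0] at this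
  simp at this

lemma cs_sol {n : ℕ} (d : Fin n → ℤˣ) {M : Fin n → Fin n → ℤˣ} (h : IsUnit (rm M)) (j : Fin n) :
    sol (cs d M) j = (((d j : ℤˣ) : ℤ) : ℝ) * sol M j := by
  have := sol_unique (cs_unit d h) (fun j => (((d j : ℤˣ) : ℤ) : ℝ) * sol M j) (by
    rw [← sol_spec h]
    ext i
    simp only [Matrix.mulVec, dotProduct]
    refine Finset.sum_congr rfl fun k _ => ?_
    have := usq (d k)
    simp only [rm, cs, Matrix.of_apply]
    push_cast
    linear_combination (((M i k : ℤˣ) : ℤ) : ℝ) * sol M k * this)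
  exact (congrFun this j).symm

open Classical in
lemma good_count (n : ℕ) :
    (univ.filter (fun M : Fin n → Fin n → ℤˣ => IsUnit (rm M) ∧ ∀ i, sol M i ≠ 0)).card
     = 2 ^ n * (univ.filter (fun M : Fin n → Fin n → ℤˣ => IsUnit (rm M) ∧ ∀ i, 0 < sol M i)).card := by
  let f : (Fin n → Fin n → ℤˣ) → (Fin n → ℤˣ) := fun M i => if 0 < sol M i then 1 else -1
  rw [Finset.card_eq_sum_card_fiberwise (f := f) (t := univ) (fun _ _ => mem_coe.2 (mem_univ _))]
  have : ∀ d : Fin n → ℤˣ, ((univ.filter (fun M : Fin n → Fin n → ℤˣ => IsUnit (rm M) ∧ ∀ i, sol M i ≠ 0)).filter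
      (fun M => f M = d)).card = (univ.filter (fun M : Fin n → Fin n → ℤˣ => IsUnit (rm M) ∧ ∀ i, 0 < sol M i)).card := by
    intro d
    refine Finset.card_nbij' (cs d) (cs d) ?_ ?_ (fun M _ => cs_cs d M) (fun M _ => cs_cs d M)
    · intro M hM
      simp only [coe_filter, mem_filter, mem_univ, true_and, Set.mem_setOf_eq] at hM ⊢
      obtain ⟨⟨hu, hnz⟩, rfl⟩ := hM
      refine ⟨cs_unit _ hu, fun i => ?_⟩
      rw [cs_sol _ hu]
      simp only [f]
      split_ifs with h
      · simpa using h
      · have : sol M i < 0 := lt_of_le_of_ne (not_lt.1 h) (hnz i)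
        simpa using this
    · intro M hM
      simp only [coe_filter, mem_filter, mem_univ, true_and, Set.mem_setOf_eq] at hM ⊢
      obtain ⟨hu, hpos⟩ := hM
      refine ⟨⟨cs_unit _ hu, fun i => ?_⟩, ?_⟩
      · rw [cs_sol _ hu]
        refine mul_ne_zero ?_ (hpos i).ne'
        intro h0
        have := usq (d i)
        rw [h0] at this
        simp at this
      · funext i
        simp only [f]
        rw [cs_sol _ hu]
        rcases Int.units_eq_one_or (d i) with h | h
        · simp [h, hpos i]
        · simp [h, (hpos i).le]
  rw [Finset.sum_congr rfl fun d _ => this d, sum_const, Finset.card_univ, Fintype.card_fun,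
    Fintype.card_units_int, Fintype.card_fin, smul_eq_mul]

/-- row normalisation by column `i` -/
def rs {n : ℕ} (i : Fin n) (M : Fin n → Fin n → ℤˣ) : Fin n → Fin n → ℤˣ :=
  fun j k => if k = i then M j i else M j k * M j i

lemma rs_rs {n : ℕ} (i : Fin n) (M : Fin n → Fin n → ℤˣ) : rs i (rs i M) = M := by
  funext j k
  by_cases h : k = i
  · simp [rs, h]
  · simp [rs, h, mul_assoc]

open Classical in
lemma zero_count (n : ℕ) :
    (univ.filter (fun M : Fin n → Fin n → ℤˣ => IsUnit (rm M) ∧ ¬ ∀ i, sol M i ≠ 0)).card ≤ n * (Sing n).card := by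
  have hsub : (univ.filter (fun M : Fin n → Fin n → ℤˣ => IsUnit (rm M) ∧ ¬ ∀ i, sol M i ≠ 0)) ⊆
      univ.biUnion (fun i => univ.filter (fun M : Fin n → Fin n → ℤˣ => IsUnit (rm M) ∧ sol M i = 0)) := by
    intro M hM
    have hM := (mem_filter.1 hM).2
    obtain ⟨hu, h⟩ := hM
    push Not at h
    obtain ⟨i, hi⟩ := h
    rw [mem_biUnion]
    exact ⟨i, mem_univ _, mem_filter.2 ⟨mem_univ _, hu, hi⟩⟩
  refine (Finset.card_le_card hsub).trans (Finset.card_biUnion_le.trans ?_)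
  have : ∀ i, (univ.filter (fun M : Fin n → Fin n → ℤˣ => IsUnit (rm M) ∧ sol M i = 0)).card ≤ (Sing n).card := by
    intro i
    refine Finset.card_le_card_of_injOn (rs i) ?_ ?_
    · intro M hM
      obtain ⟨hu, hi⟩ := (mem_filter.1 hM).2
      simp only [Sing, coe_filter, mem_univ, true_and, Set.mem_setOf_eq]
      by_contra hcon
      have hu' := (rm_det _).2 hcon
      have hdet : (rm (rs i M)).det ≠ 0 := by
        rw [Matrix.isUnit_iff_isUnit_det, isUnit_iff_ne_zero] at hu'; exact hu'
      apply hdet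
      rw [← Matrix.exists_mulVec_eq_zero_iff]
      refine ⟨sol M - Pi.single i 1, ?_, ?_⟩
      · intro h0
        have := congrFun h0 i
        simp [hi] at this
      · rw [Matrix.mulVec_sub, Matrix.mulVec_single_one]
        ext j
        have hs := congrFun (sol_spec hu) j
        simp only [Matrix.mulVec, dotProduct, Pi.one_apply] at hs
        have e : (rm (rs i M) *ᵥ sol M) j = (((M j i : ℤˣ) : ℤ) : ℝ) * ∑ k, rm M j k * sol M k := by
          simp only [Matrix.mulVec, dotProduct]
          rw [Finset.mul_sum]
          refine Finset.sum_congr rfl fun k _ => ?_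
          by_cases hk : k = i
          · rw [hk, hi]; ring
          · simp only [rm, rs, Matrix.of_apply, if_neg hk]
            push_cast
            ring
        rw [Pi.sub_apply, e, hs]
        simp [rm, rs, Matrix.col]
    · intro M _ M' _ h
      rw [← rs_rs i M, ← rs_rs i M', h]
  calc _ ≤ ∑ _i : Fin n, (Sing n).card := Finset.sum_le_sum fun i _ => this i
    _ = _ := by simp

end H
end RN

/-- Lemma (Lemma `lemma-aux1`): `r_n ∼ 1/2ⁿ`, i.e. `lim_{n→∞} 2ⁿ r_n = 1`. -/
theorem rn_asymptotic :
    Filter.Tendsto (fun n : ℕ => (2 : ℝ) ^ n * rn n) Filter.atTop (nhds 1) := by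
  classical
  have hP := RN.sing_tendsto
  have hlow : Filter.Tendsto (fun n : ℕ => 1 - 2 * ((n : ℝ) * ((RN.Sing n).card / ((2 : ℝ) ^ n) ^ n)))
      Filter.atTop (nhds 1) := by
    have := (hP.const_mul 2).const_sub 1
    simpa using this
  have main : ∀ᶠ n : ℕ in Filter.atTop,
      1 - 2 * ((n : ℝ) * ((RN.Sing n).card / ((2 : ℝ) ^ n) ^ n)) ≤ (2 : ℝ) ^ n * rn n ∧ (2 : ℝ) ^ n * rn n ≤ 1 := by
    filter_upwards [hP.eventually_le_const (show (0 : ℝ) < 1 / 2 by norm_num), Filter.eventually_ge_atTop 1] with n hn hn1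
    have hn1r : (1 : ℝ) ≤ n := by exact_mod_cast hn1
    have e1 : Nat.card {C : Matrix (Fin n) (Fin n) ℝ // IsSignMatrix C ∧ IsUnit C ∧
        ∀ i, 0 < (C⁻¹ *ᵥ (1 : Fin n → ℝ)) i}
        = (univ.filter (fun M : Fin n → Fin n → ℤˣ => IsUnit (RN.rm M) ∧ ∀ i, 0 < RN.sol M i)).card := by
      rw [RN.card_rm (n := n) (fun C => IsUnit C ∧ ∀ i, 0 < (C⁻¹ *ᵥ (1 : Fin n → ℝ)) i)]
      unfold RN.sol
      congr!
    have e2 : Nat.card {C : Matrix (Fin n) (Fin n) ℝ // IsSignMatrix C ∧ IsUnit C}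
        = (univ.filter (fun M : Fin n → Fin n → ℤˣ => IsUnit (RN.rm M))).card := by
      rw [RN.card_rm (n := n) (fun C => IsUnit C)]
      congr!
    unfold rn
    rw [e1, e2]
    have g := RN.good_count n
    have z := RN.zero_count n
    set U := (univ.filter (fun M : Fin n → Fin n → ℤˣ => IsUnit (RN.rm M))) with hU
    have hsplit := Finset.card_filter_add_card_filter_not (s := U) (fun M => ∀ i, RN.sol M i ≠ 0)
    rw [hU, Finset.filter_filter, Finset.filter_filter, ← hU] at hsplit
    have hsing : U.card + (RN.Sing n).card = (2 ^ n) ^ n := by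
      have h := Finset.card_filter_add_card_filter_not (s := (univ : Finset (Fin n → Fin n → ℤˣ))) (fun M => (RN.zm M).det ≠ 0)
      have h1 : univ.filter (fun M : Fin n → Fin n → ℤˣ => (RN.zm M).det ≠ 0) = U := by
        rw [hU]; ext M; simp [RN.rm_det]
      have h2 : univ.filter (fun M : Fin n → Fin n → ℤˣ => ¬ (RN.zm M).det ≠ 0) = RN.Sing n := by
        ext M; simp [RN.Sing]
      rw [h1, h2] at h
      rw [h, Finset.card_univ, Fintype.card_fun, Fintype.card_fun, Fintype.card_units_int, Fintype.card_fin]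
    set G := (univ.filter (fun M : Fin n → Fin n → ℤˣ => IsUnit (RN.rm M) ∧ ∀ i, 0 < RN.sol M i)).card with hG
    set Zc := (univ.filter (fun M : Fin n → Fin n → ℤˣ => IsUnit (RN.rm M) ∧ ¬ ∀ i, RN.sol M i ≠ 0)).card with hZ
    rw [g] at hsplit
    have hsplit' : (2 : ℝ) ^ n * G + Zc = U.card := by exact_mod_cast hsplit
    have hsing' : (U.card : ℝ) + (RN.Sing n).card = (2 ^ n) ^ n := by exact_mod_cast hsing
    have z' : (Zc : ℝ) ≤ n * (RN.Sing n).card := by exact_mod_cast z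
    set T : ℝ := ((2 : ℝ) ^ n) ^ n with hT
    have hT0 : 0 < T := by positivity
    set S : ℝ := ((RN.Sing n).card : ℝ) with hS
    have hS0 : 0 ≤ S := by positivity
    have hZ0 : (0 : ℝ) ≤ Zc := by positivity
    have hST : n * S ≤ T / 2 := by
      rw [← mul_div_assoc, div_le_iff₀ hT0] at hn
      linarith
    have hU2 : T / 2 ≤ U.card := by nlinarith
    have hU0 : (0 : ℝ) < U.card := by linarith
    rw [← mul_div_assoc ((2 : ℝ) ^ n) (G : ℝ)]
    constructor
    · rw [le_div_iff₀ hU0]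
      have h3 : 2 * ((n : ℝ) * (S / T)) * U.card ≥ n * S := by
        have : 2 * ((n : ℝ) * (S / T)) * (T / 2) = n * S := by field_simp
        rw [← this]
        exact mul_le_mul_of_nonneg_left hU2 (by positivity)
      linarith
    · rw [div_le_one hU0]; linarith
  exact tendsto_of_tendsto_of_tendsto_of_le_of_le' hlow tendsto_const_nhds
    (main.mono fun n h => h.1) (main.mono fun n h => h.2)
end

section
/- Let n ≥ 2 and let C be an invertible n×n sign matrix. If all coordinates of C⁻¹𝟙 are strictly positive, then 1 + 𝟙ᵀC⁻¹𝟙 > 0; if all coordinates of C⁻¹𝟙 are strictly negative, then 1 + 𝟙ᵀC⁻¹𝟙 < 0. -/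
open Matrix

/-- For `n ≥ 2` and an invertible sign matrix `C`: if all coordinates of `C⁻¹𝟙`
are strictly positive then `1 + 𝟙ᵀC⁻¹𝟙 > 0`, and if all coordinates of `C⁻¹𝟙`
are strictly negative then `1 + 𝟙ᵀC⁻¹𝟙 < 0`. -/
theorem one_add_quadform_sign (n : ℕ) (hn : 2 ≤ n)
    (C : Matrix (Fin n) (Fin n) ℝ) (hC : IsSignMatrix C) (hinv : IsUnit C) :
    ((∀ i, 0 < (C⁻¹ *ᵥ (1 : Fin n → ℝ)) i) →
      0 < 1 + (1 : Fin n → ℝ) ⬝ᵥ (C⁻¹ *ᵥ (1 : Fin n → ℝ))) ∧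
    ((∀ i, (C⁻¹ *ᵥ (1 : Fin n → ℝ)) i < 0) →
      1 + (1 : Fin n → ℝ) ⬝ᵥ (C⁻¹ *ᵥ (1 : Fin n → ℝ)) < 0) := by
  have hdet : IsUnit C.det := (Matrix.isUnit_iff_isUnit_det C).1 hinv
  have hx : C *ᵥ (C⁻¹ *ᵥ (1 : Fin n → ℝ)) = 1 := by
    rw [Matrix.mulVec_mulVec, Matrix.mul_nonsing_inv C hdet, Matrix.one_mulVec]
  generalize C⁻¹ *ᵥ (1 : Fin n → ℝ) = x at hx
  rw [one_dotProduct]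
  constructor
  · intro h
    have := Finset.sum_nonneg (fun i (_ : i ∈ Finset.univ) => (h i).le)
    linarith
  · intro h
    by_contra hcon
    have hrow : ∀ i j, C i j = -1 := by
      intro i j
      have h1 : ∑ j, C i j * x j = 1 := congrFun hx i
      have h2 : ∑ j, (-(1 + C i j) * x j) = -(1 + ∑ j, x j) := by
        have h5 : -(1 + ∑ j, x j) = -(∑ j, C i j * x j + ∑ j, x j) := by rw [h1]
        rw [h5, ← Finset.sum_add_distrib, ← Finset.sum_neg_distrib]
        exact Finset.sum_congr rfl fun j _ => by ring
      have h3 : ∀ j ∈ Finset.univ, 0 ≤ -(1 + C i j) * x j := by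
        intro j _
        have := h j
        rcases hC i j with e | e <;> rw [e] <;> linarith
      have h4 := Finset.single_le_sum h3 (Finset.mem_univ j)
      have := h j
      rcases hC i j with e | e
      · rw [e] at h4
        linarith
      · exact e
    refine hdet.ne_zero (Matrix.det_zero_of_row_eq (i := ⟨0, by omega⟩) (j := ⟨1, by omega⟩) ?_ ?_)
    · simp
    · funext k
      rw [hrow, hrow]
end
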